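/- arXiv:2209.02306 — 2 statements merged into one kernel-verified Lean document; each statement's English description precedes it below -/
import Mathlib

section
/- Let M = cQ + εD ∈ 𝔻ℍ[t] be a bounded monic motion polynomial with c ∈ ℝ[t] and Q, D ∈ ℍ[t], such that both M and Q have only constant real polynomial factors (i.e., mrpf(M) = 1 and mrpf(Q) = 1). Let g ∈ ℝ[t] be the greatest common monic real polynomial divisor of the three polynomials c, Q*·D, and D·Q*. Then M admits a factorization into monic linear motion polynomial factors if and only if c·g divides D·D* in ℝ[t]. -/
open Polynomial DualNumber TrivSqZeroExt

noncomputable section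

/-- The real quaternions. -/
abbrev Hq : Type := Quaternion ℝ

/-- The dual quaternions. -/
abbrev DHq : Type := DualNumber Hq

/-- Conjugation of a dual quaternion: `(p + ε d)* = p* + ε d*`. -/
instance : Star DHq := ⟨fun x => inl (star x.fst) + inr (star x.snd)⟩

/-- Coefficient-wise (quaternion) conjugation of a polynomial. -/
def cstar {R : Type*} [Semiring R] [Star R] (A : R[X]) : R[X] :=
  A.sum fun n a => Polynomial.C (star a) * Polynomial.X ^ n

/-- The embedding `ℝ[t] → ℍ[t]`. -/
def qPoly (f : ℝ[X]) : Hq[X] := f.map (algebraMap ℝ Hq)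

/-- The embedding `ℍ[t] → 𝔻ℍ[t]` (primal part). -/
def dhQ (P : Hq[X]) : DHq[X] := P.map (inlHom Hq Hq)

/-- The embedding `ℝ[t] → 𝔻ℍ[t]`. -/
def dPoly (f : ℝ[X]) : DHq[X] := dhQ (qPoly f)

/-- The dual quaternion polynomial `P + ε D` with primal part `P` and dual part `D`. -/
def mp (P D : Hq[X]) : DHq[X] := dhQ P + Polynomial.C ε * dhQ D

/-- The primal part of a dual quaternion polynomial. -/
def primal (A : DHq[X]) : Hq[X] := A.map (fstHom ℝ Hq Hq).toRingHom

/-- A motion polynomial: a dual quaternion polynomial whose norm polynomial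
`ν(M) = M·M*` is a nonzero real polynomial. -/
def IsMotion (M : DHq[X]) : Prop := ∃ f : ℝ[X], f ≠ 0 ∧ M * cstar M = dPoly f

/-- A real polynomial divides a quaternion polynomial. -/
def RDvdQ (f : ℝ[X]) (A : Hq[X]) : Prop := ∃ B : Hq[X], A = qPoly f * B

/-- A real polynomial divides a dual quaternion polynomial. -/
def RDvdD (f : ℝ[X]) (A : DHq[X]) : Prop := ∃ B : DHq[X], A = dPoly f * B

/-- `g` is the greatest common monic real polynomial divisor of a quaternion polynomial `A`
(with itself), i.e. `g = mrpf A`. -/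
def IsMrpfQ (g : ℝ[X]) (A : Hq[X]) : Prop :=
  g.Monic ∧ RDvdQ g A ∧ ∀ f : ℝ[X], f.Monic → RDvdQ f A → f ∣ g

/-- `g` is the greatest common monic real polynomial divisor of `c ∈ ℝ[t]` and a quaternion
polynomial `A`, i.e. `g = mrpf(c, A)`. -/
def IsMrpf2 (g : ℝ[X]) (c : ℝ[X]) (A : Hq[X]) : Prop :=
  g.Monic ∧ g ∣ c ∧ RDvdQ g A ∧
    ∀ f : ℝ[X], f.Monic → f ∣ c → RDvdQ f A → f ∣ g

/-- `g` is the greatest common monic real polynomial divisor of `c ∈ ℝ[t]` and two quaternion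
polynomials `A` and `B`, i.e. `g = mrpf(c, A, B)`. -/
def IsMrpf3 (g : ℝ[X]) (c : ℝ[X]) (A B : Hq[X]) : Prop :=
  g.Monic ∧ g ∣ c ∧ RDvdQ g A ∧ RDvdQ g B ∧
    ∀ f : ℝ[X], f.Monic → f ∣ c → RDvdQ f A → RDvdQ f B → f ∣ g

/-- A quaternion polynomial is reduced: `mrpf = 1`, i.e. it has only constant real
polynomial factors. -/
def ReducedQ (A : Hq[X]) : Prop := ∀ f : ℝ[X], f.Monic → RDvdQ f A → f = 1

/-- A dual quaternion polynomial is reduced: `mrpf = 1`. -/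
def ReducedD (A : DHq[X]) : Prop := ∀ f : ℝ[X], f.Monic → RDvdD f A → f = 1

/-- Boundedness of a (monic reduced) motion polynomial: `mrpf` of its primal part has
no real root, equivalently no linear real polynomial `t - a` divides the primal part. -/
def BoundedD (M : DHq[X]) : Prop :=
  ∀ a : ℝ, ¬ RDvdQ (Polynomial.X - Polynomial.C a) (primal M)

/-- A generic motion polynomial: monic, a motion polynomial, with `mrpf` of the primal
part equal to `1`. -/
def GenericD (M : DHq[X]) : Prop :=
  M.Monic ∧ IsMotion M ∧ ReducedQ (primal M)

/-- The monic linear dual quaternion polynomial `t - p - ε d`. -/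
def lin (p d : Hq) : DHq[X] := mp (Polynomial.X - Polynomial.C p) (-Polynomial.C d)

/-- `M` admits a factorization into monic linear motion polynomial factors. -/
def HasLinFact (M : DHq[X]) : Prop :=
  ∃ L : List DHq, (∀ h ∈ L, IsMotion (Polynomial.X - Polynomial.C h)) ∧
    M = (L.map fun h => Polynomial.X - Polynomial.C h).prod

end

/-!
Call `c · g ∣ DD*` the norm condition on `cQ + εD`. Let `e + εd` be a linear motion polynomial whose
norm `N = ee*` is irreducible; boundedness makes every linear factor of `M` one of these. In
`(cQ + εD)(e + εd) = cQe + ε(De + cQd)` the quaternion polynomial `Qe` stays reduced unless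
`Q = Q₁e*`, and then the primal part is `(Nc)Q₁`. In both cases, comparing the `N`-primary parts and
the parts prime to `N` separately, the norm condition passes from the cofactor to the product, so
necessity follows by induction on the number of factors.

For sufficiency, a linear factor has to be split off in such a way that the cofactor inherits the
norm condition. If `c` is constant this condition is void, and a linear right factor of `Q` lifts.
Otherwise let `N` be an irreducible factor of `c`. Then `N ∣ DD*` and `D` is not divisible by `N`,
so `D` has a right factor `e` with `ee* = N` (and, symmetrically, a left one). Let `N ^ m` be the
largest power of `N` dividing `c`, `Q*D` and `DQ*`, and conjugate if necessary so that `N ^ (m + 1)`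
does not divide both `c` and `DQ*`. If `m = 0`, the factor `e` can be split off with dual part `0`.
If `m > 0`, then `e` is also a right factor of `Q`, and a suitable dual part makes the exponent of
`N` in `D'Q'*` smaller than `m` for the cofactor `cQ' + εD'`.
-/

namespace MotionPolynomial

open Quaternion

noncomputable section

section CommRing

variable {R : Type*} [CommRing R] {r s c f : R} {a b : ℍ[R]}

/-- The quaternion `w + x i + y j + z k`, an element of `ℍ[R]` rather than of the
`QuaternionAlgebra` it unfolds to. -/
@[simps]
def ofComponents (w x y z : R) : ℍ[R] := ⟨w, x, y, z⟩

theorem coe_dvd_iff :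
    (r : ℍ[R]) ∣ a ↔ r ∣ a.re ∧ r ∣ a.imI ∧ r ∣ a.imJ ∧ r ∣ a.imK := by
  constructor
  · rintro ⟨b, rfl⟩
    simp [coe_mul_eq_smul]
  · rintro ⟨⟨x, hx⟩, ⟨y, hy⟩, ⟨z, hz⟩, ⟨w, hw⟩⟩
    refine ⟨ofComponents x y z w, ?_⟩
    ext <;> simp [coe_mul_eq_smul, hx, hy, hz, hw]

theorem coe_dvd_coe : (r : ℍ[R]) ∣ (s : ℍ[R]) ↔ r ∣ s := by
  simp [coe_dvd_iff]

theorem dvd_re (h : (r : ℍ[R]) ∣ a) : r ∣ a.re :=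
  (coe_dvd_iff.1 h).1

theorem coe_dvd_mul_left (h : (r : ℍ[R]) ∣ b) (a : ℍ[R]) : (r : ℍ[R]) ∣ a * b := by
  obtain ⟨b, rfl⟩ := h
  exact ⟨a * b, by rw [← mul_assoc, ← coe_commutes, mul_assoc]⟩

theorem coe_dvd_star : (r : ℍ[R]) ∣ star a ↔ (r : ℍ[R]) ∣ a := by
  simp [coe_dvd_iff]

theorem coe_dvd_smul (h : r ∣ s) (a : ℍ[R]) : (r : ℍ[R]) ∣ s • a := by
  rw [← coe_mul_eq_smul]
  exact (coe_dvd_coe.2 h).mul_right a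

theorem coe_dvd_smul_of_coe_dvd (s : R) (h : (r : ℍ[R]) ∣ a) : (r : ℍ[R]) ∣ s • a := by
  rw [← coe_mul_eq_smul]
  exact coe_dvd_mul_left h _

theorem coe_dvd_of_coe_dvd_smul (hrs : IsCoprime r s) (h : (r : ℍ[R]) ∣ s • a) :
    (r : ℍ[R]) ∣ a := by
  simp only [coe_dvd_iff, re_smul, imI_smul, imJ_smul, imK_smul, smul_eq_mul] at h ⊢
  exact ⟨hrs.dvd_of_dvd_mul_left h.1, hrs.dvd_of_dvd_mul_left h.2.1,
    hrs.dvd_of_dvd_mul_left h.2.2.1, hrs.dvd_of_dvd_mul_left h.2.2.2⟩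

theorem mul_dvd_of_isCoprime (hrs : IsCoprime r s) {x : R} (hr : c * r ∣ x) (hs : c * s ∣ x) :
    c * (r * s) ∣ x := by
  obtain ⟨u, v, huv⟩ := hrs
  have hx : x = u * r * x + v * s * x := by rw [← add_mul, huv, one_mul]
  rw [hx]
  refine dvd_add ?_ ?_
  · rw [show c * (r * s) = r * (c * s) by ring]
    exact mul_dvd_mul (dvd_mul_left r u) hs
  · rw [show c * (r * s) = s * (c * r) by ring]
    exact mul_dvd_mul (dvd_mul_left s v) hr

theorem re_mul_comm (a b : ℍ[R]) : (a * b).re = (b * a).re := by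
  simp only [re_mul]
  ring

theorem add_star_eq_smul_one (a : ℍ[R]) : a + star a = (2 * a.re) • (1 : ℍ[R]) := by
  ext <;> simp [two_mul]

theorem mul_mul_star_self (a b : ℍ[R]) : a * b * star b = normSq b • a := by
  rw [mul_assoc, self_mul_star, mul_coe_eq_smul]

theorem mul_star_mul_self (a b : ℍ[R]) : a * star b * b = normSq b • a := by
  rw [mul_assoc, star_mul_self, mul_coe_eq_smul]

theorem mul_eq_sub_smul_mul_add (a b d e : ℍ[R]) (c : R) :
    b * e = (b - c • (a * d * star e)) * e + (normSq e * c) • (a * d) := by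
  rw [sub_mul, smul_mul_assoc, mul_star_mul_self, smul_smul, mul_comm c, sub_add_cancel]

theorem self_mul_mul_self (a x : ℍ[R]) :
    a * x * a = (2 * (x * a).re) • a - normSq a • star x := by
  have h : x * a = (2 * (x * a).re) • (1 : ℍ[R]) - star a * star x := by
    rw [← add_star_eq_smul_one, star_mul, add_sub_cancel_right]
  rw [mul_assoc, h, mul_sub, mul_smul_comm, mul_one, ← mul_assoc, self_mul_star,
    coe_mul_eq_smul, ← h]

theorem normSq_add_smul (a b : ℍ[R]) (c : R) :
    normSq (a + c • b) = normSq a + c * (2 * (a * star b).re + c * normSq b) := by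
  simp only [normSq_def', re_add, imI_add, imJ_add, imK_add, re_smul, imI_smul, imJ_smul,
    imK_smul, smul_eq_mul, re_mul, re_star, imI_star, imJ_star, imK_star]
  ring

theorem mul_dvd_normSq_add_smul_iff (hf : f ∣ c) (hab : f ∣ (a * star b).re) :
    c * f ∣ normSq (a + c • b) ↔ c * f ∣ normSq a := by
  rw [normSq_add_smul]
  exact dvd_add_left (mul_dvd_mul_left c ((hab.mul_left 2).add (hf.mul_right _)))

theorem re_star_mul_mul_dual (a b x y : ℍ[R]) :
    (star (a * b) * (a * y + x * b)).re =
      normSq a * (star b * y).re + normSq b * (star a * x).re := by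
  have h₁ : star (a * b) * (a * y) = normSq a • (star b * y) := by
    rw [star_mul, mul_assoc, ← mul_assoc (star a), star_mul_self, coe_mul_eq_smul, mul_smul_comm]
  have h₂ : (star (a * b) * (x * b)).re = normSq b * (star a * x).re := by
    rw [re_mul_comm, star_mul, ← mul_assoc, mul_mul_star_self, smul_mul_assoc, re_smul,
      smul_eq_mul, re_mul_comm]
  rw [mul_add, re_add, h₂, h₁, re_smul, smul_eq_mul]

theorem re_star_mul_mul_add (a b d e x : ℍ[R]) :
    (star ((b * star e + a) * e) * (x * e + a * d)).re =
      normSq e * (star (b * star e + a) * x + star b * (a * d)).re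
        + normSq a * (star e * d).re := by
  have hx : (star ((b * star e + a) * e) * (x * e)).re =
      normSq e * (star (b * star e + a) * x).re := by
    rw [← mul_assoc, re_mul_comm, star_mul, mul_assoc, ← mul_assoc, self_mul_star,
      coe_mul_eq_smul, re_smul, smul_eq_mul]
  have hd : star ((b * star e + a) * e) * (a * d) =
      normSq e • (star b * (a * d)) + normSq a • (star e * d) := by
    rw [star_mul, star_add, star_mul, star_star, mul_add, add_mul, ← mul_assoc (star e) e,
      star_mul_self, coe_mul_eq_smul, smul_mul_assoc, mul_assoc (star e), ← mul_assoc (star a),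
      star_mul_self, coe_mul_eq_smul, mul_smul_comm]
  rw [mul_add, re_add, hx, hd, re_add, re_smul, re_smul, re_add, smul_eq_mul, smul_eq_mul]
  ring

theorem star_mul_eq_mul_self {d : ℍ[R]} (hd : star d = -d) (hre : (star a * d).re = 0) :
    star a * d = d * a := by
  have htrace := add_star_eq_smul_one (star a * d)
  rw [hre, mul_zero, zero_smul, star_mul, star_star, hd, neg_mul, ← sub_eq_add_neg] at htrace
  exact sub_eq_zero.1 htrace

theorem mul_eq_mul_star_of_star_mul_eq {d : ℍ[R]} (h : star a * d = d * a) :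
    a * d = d * star a := by
  have htrace : (a + star a) * d = d * (a + star a) := by
    rw [add_star_eq_smul_one, smul_one_mul, mul_smul_one]
  rwa [add_mul, mul_add, h, add_comm (a * d), add_right_inj] at htrace

theorem exists_not_dvd_re_mul (h : ¬(r : ℍ[R]) ∣ a) : ∃ x : ℍ[R], ¬r ∣ (x * a).re := by
  contrapose! h
  rw [coe_dvd_iff]
  refine ⟨?_, ?_, ?_, ?_⟩
  · simpa using h 1
  · simpa using h (ofComponents 0 1 0 0)
  · simpa using h (ofComponents 0 0 1 0)
  · simpa using h (ofComponents 0 0 0 1)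

end CommRing

section IsDomain

variable {R : Type*} [CommRing R] [IsDomain R] {r s p : R} {a b e : ℍ[R]}

theorem smul_left_cancel (hr : r ≠ 0) (h : r • a = r • b) : a = b := by
  rw [Quaternion.ext_iff] at h ⊢
  simpa [hr] using h

theorem coe_mul_dvd_smul_iff (hr : r ≠ 0) :
    ((r * s : R) : ℍ[R]) ∣ r • a ↔ (s : ℍ[R]) ∣ a := by
  simp only [coe_dvd_iff, re_smul, imI_smul, imJ_smul, imK_smul, smul_eq_mul,
    mul_dvd_mul_iff_left hr]

theorem coe_normSq_dvd_mul_star_iff (he : normSq e ≠ 0) :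
    ((normSq e : R) : ℍ[R]) ∣ a * star e ↔ ∃ b, a = b * e := by
  constructor
  · rintro ⟨b, hb⟩
    refine ⟨b, smul_left_cancel he ?_⟩
    rw [← mul_star_mul_self, hb, coe_mul_eq_smul, smul_mul_assoc]
  · rintro ⟨b, rfl⟩
    rw [mul_mul_star_self]
    exact coe_dvd_smul dvd_rfl b

theorem mul_right_cancel_of_normSq_ne_zero (he : normSq e ≠ 0) (h : a * e = b * e) : a = b :=
  smul_left_cancel he (by rw [← mul_mul_star_self, h, mul_mul_star_self])

theorem coe_pow_dvd_of_coe_pow_dvd_smul (hp : Prime p) (ha : ¬(p : ℍ[R]) ∣ a) {n : ℕ}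
    (h : ((p ^ n : R) : ℍ[R]) ∣ r • a) : p ^ n ∣ r := by
  obtain ⟨x, hx⟩ := exists_not_dvd_re_mul ha
  refine hp.pow_dvd_of_dvd_mul_right n hx ?_
  simpa using dvd_re (coe_dvd_mul_left h x)

theorem coe_dvd_mul_or_of_dvd_normSq (hp : Prime p) (hp2 : ¬p ∣ 2) (he : p ∣ normSq e)
    (h : (p : ℍ[R]) ∣ a * e * b) : (p : ℍ[R]) ∣ a * e ∨ (p : ℍ[R]) ∣ e * b := by
  refine or_iff_not_imp_right.2 fun heb => ?_
  obtain ⟨x, hx⟩ := exists_not_dvd_re_mul heb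
  have hre : ¬p ∣ 2 * (b * x * e).re := by
    rw [re_mul_comm, ← mul_assoc, re_mul_comm]
    exact fun hdvd => (hp.dvd_or_dvd hdvd).elim hp2 hx
  have hexp : a * e * b * (x * e) =
      (2 * (b * x * e).re) • (a * e) - normSq e • (a * star (b * x)) := by
    rw [show a * e * b * (x * e) = a * (e * (b * x) * e) by simp only [mul_assoc],
      self_mul_mul_self, mul_sub, mul_smul_comm, mul_smul_comm]
  have hsmul : (p : ℍ[R]) ∣ (2 * (b * x * e).re) • (a * e) :=
    (dvd_sub_left (coe_dvd_smul he _)).1 (hexp ▸ h.mul_right (x * e))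
  by_contra hae
  exact hre (by simpa using coe_pow_dvd_of_coe_pow_dvd_smul hp hae (n := 1) (by simpa using hsmul))

theorem coe_pow_dvd_left_of_coe_pow_dvd_mul (hp : Prime p) (hp2 : ¬p ∣ 2) {n : ℕ} {z : ℍ[R]}
    (ha : ((p ^ n : R) : ℍ[R]) ∣ z * a) (hb : ((p ^ n : R) : ℍ[R]) ∣ z * b)
    (hab : ¬(p : ℍ[R]) ∣ star b * a) : ((p ^ n : R) : ℍ[R]) ∣ z := by
  obtain ⟨x, hx⟩ := exists_not_dvd_re_mul hab
  have hexp : z * a * (x * star b) + z * b * star (a * x) = (2 * (x * (star b * a)).re) • z := by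
    have htrace : a * x * star b + star (a * x * star b) = (2 * (x * (star b * a)).re) • 1 := by
      rw [add_star_eq_smul_one, re_mul_comm, ← mul_assoc, re_mul_comm]
    rw [star_mul, star_star] at htrace
    rw [← mul_one z, ← mul_smul_comm, ← htrace]
    simp only [mul_add, mul_one, mul_assoc]
  have hsmul : ((p ^ n : R) : ℍ[R]) ∣ (2 * (x * (star b * a)).re) • z :=
    hexp ▸ (ha.mul_right _).add (hb.mul_right _)
  have hprime : ¬p ∣ 2 * (x * (star b * a)).re := fun h => (hp.dvd_or_dvd h).elim hp2 hx
  simp only [coe_dvd_iff, re_smul, imI_smul, imJ_smul, imK_smul, smul_eq_mul] at hsmul ⊢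
  exact ⟨hp.pow_dvd_of_dvd_mul_left n hprime hsmul.1,
    hp.pow_dvd_of_dvd_mul_left n hprime hsmul.2.1,
    hp.pow_dvd_of_dvd_mul_left n hprime hsmul.2.2.1,
    hp.pow_dvd_of_dvd_mul_left n hprime hsmul.2.2.2⟩

end IsDomain

section NormDivisible

variable {R : Type*} [CommRing R] {c : R} {Q D : ℍ[R]}

/-- The condition `c · gcd(c, Q*D, DQ*) ∣ DD*` on the motion polynomial `cQ + εD`, stated without
choosing the greatest common divisor. -/
def NormDivisible (c : R) (Q D : ℍ[R]) : Prop :=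
  ∀ f : R, f ∣ c → (f : ℍ[R]) ∣ star Q * D → (f : ℍ[R]) ∣ D * star Q → c * f ∣ normSq D

theorem NormDivisible.dvd_normSq (h : NormDivisible c Q D) : c ∣ normSq D := by
  simpa using h 1 (one_dvd c) (by simp) (by simp)

protected theorem NormDivisible.star (h : NormDivisible c Q D) :
    NormDivisible c (star Q) (star D) := by
  intro f hc hl hr
  rw [normSq_star]
  exact h f hc (coe_dvd_star.1 (by simpa using hr)) (coe_dvd_star.1 (by simpa using hl))

theorem normDivisible_of_isUnit (hc : IsUnit c) : NormDivisible c Q D :=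
  fun _ hf _ _ => (hc.mul (isUnit_of_dvd_unit hf hc)).dvd

theorem normDivisible_of_pow_of_isCoprime [IsDomain R] [IsPrincipalIdealRing R] {q : R}
    (hq : Prime q) (hc : c ≠ 0)
    (hpow : ∀ n : ℕ, q ^ n ∣ c → ((q ^ n : R) : ℍ[R]) ∣ star Q * D →
      ((q ^ n : R) : ℍ[R]) ∣ D * star Q → c * q ^ n ∣ normSq D)
    (hcoprime : ∀ f : R, IsCoprime f q → f ∣ c → (f : ℍ[R]) ∣ star Q * D →
      (f : ℍ[R]) ∣ D * star Q → c * f ∣ normSq D) :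
    NormDivisible c Q D := by
  intro f hf hl hr
  have hfin : FiniteMultiplicity q f :=
    FiniteMultiplicity.of_prime_left hq (ne_zero_of_dvd_ne_zero hc hf)
  obtain ⟨s, hs, hqs⟩ := hfin.exists_eq_pow_mul_and_not_dvd
  have hqs : IsCoprime s q := (hq.irreducible.coprime_iff_not_dvd.2 hqs).symm
  have hpf : q ^ multiplicity q f ∣ f := Dvd.intro _ hs.symm
  have hsf : s ∣ f := Dvd.intro_left _ hs.symm
  rw [hs]
  exact mul_dvd_of_isCoprime hqs.symm.pow_left
    (hpow _ (hpf.trans hf) ((coe_dvd_coe.2 hpf).trans hl) ((coe_dvd_coe.2 hpf).trans hr))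
    (hcoprime s hqs (hsf.trans hf) ((coe_dvd_coe.2 hsf).trans hl) ((coe_dvd_coe.2 hsf).trans hr))

end NormDivisible

section RightFactor

variable {R : Type*} [CommRing R] [IsDomain R] {Q D e d : ℍ[R]} {n : ℕ}

theorem coe_pow_dvd_star_mul_of_dvd (hN : Prime (normSq e)) (h2 : ¬normSq e ∣ 2)
    (hQ : ¬((normSq e : R) : ℍ[R]) ∣ Q * e)
    (hl : ((normSq e ^ (n + 1) : R) : ℍ[R]) ∣ star e * (star Q * D) * e)
    (hr : ((normSq e ^ n : R) : ℍ[R]) ∣ D * star Q) :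
    ((normSq e ^ n : R) : ℍ[R]) ∣ star Q * D := by
  have hright : ((normSq e ^ n : R) : ℍ[R]) ∣ star Q * D * e := by
    rw [← coe_mul_dvd_smul_iff hN.ne_zero, ← pow_succ', ← coe_mul_eq_smul, ← self_mul_star,
      mul_assoc]
    exact coe_dvd_mul_left (by simpa only [mul_assoc] using hl) e
  refine coe_pow_dvd_left_of_coe_pow_dvd_mul hN h2 (b := star Q) hright ?_ (by rwa [star_star])
  rw [mul_assoc]
  exact coe_dvd_mul_left hr _

theorem pow_dvd_re_of_coe_pow_dvd (hN : Prime (normSq e)) (h2 : ¬normSq e ∣ 2)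
    (he : ¬((normSq e : R) : ℍ[R]) ∣ e) (hed : e * d = d * star e) {Z : ℍ[R]}
    (hl : ((normSq e ^ (n + 1) : R) : ℍ[R]) ∣ star e * Z * e)
    (hZ : ((normSq e ^ n : R) : ℍ[R]) ∣ Z) :
    normSq e ^ (n + 1) ∣ (star e * Z * d).re := by
  have hexp : star e * Z * e * d =
      (2 * (Z * d * star e).re) • star e - normSq e • star (Z * d) := by
    rw [mul_assoc _ e, hed, ← normSq_star, ← self_mul_mul_self]
    simp only [mul_assoc]
  have hsmul : ((normSq e ^ (n + 1) : R) : ℍ[R]) ∣ (2 * (Z * d * star e).re) • star e := by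
    refine (dvd_sub_left ?_).1 (hexp ▸ hl.mul_right d)
    rw [pow_succ', coe_mul_dvd_smul_iff hN.ne_zero, coe_dvd_star]
    exact hZ.mul_right d
  have hpow := coe_pow_dvd_of_coe_pow_dvd_smul hN (mt coe_dvd_star.1 he) hsmul
  rw [mul_assoc, re_mul_comm]
  exact hN.pow_dvd_of_dvd_mul_left _ h2 hpow

end RightFactor

section Cofactor

variable {R : Type*} [CommRing R] {c f : R} {Q D e d : ℍ[R]}

theorem coe_dvd_star_mul_dual_iff (hf : f ∣ c) :
    (f : ℍ[R]) ∣ star (Q * e) * (D * e + c • (Q * d)) ↔ (f : ℍ[R]) ∣ star e * (star Q * D) * e := by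
  rw [mul_add, mul_smul_comm, dvd_add_left (coe_dvd_smul hf _), star_mul]
  simp only [mul_assoc]

theorem coe_dvd_dual_mul_star_iff (hf : f ∣ c) :
    (f : ℍ[R]) ∣ (D * e + c • (Q * d)) * star (Q * e) ↔
      (f : ℍ[R]) ∣ normSq e • (D * star Q) := by
  rw [add_mul, smul_mul_assoc, dvd_add_left (coe_dvd_smul hf _), star_mul, ← mul_assoc,
    mul_mul_star_self, smul_mul_assoc]

theorem mul_dvd_normSq_dual_iff (hd : star d = -d) (hed : e * d = d * star e) (hf : f ∣ c)
    (hre : f ∣ (star e * (star Q * D) * d).re) :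
    c * f ∣ normSq (D * e + c • (Q * d)) ↔ c * f ∣ normSq e * normSq D := by
  have hcross : (D * e * star (Q * d)).re = -(star e * (star Q * D) * d).re := by
    rw [show D * e * star (Q * d) = -(D * (e * d) * star Q) by rw [star_mul, hd]; noncomm_ring,
      hed, re_neg, ← mul_assoc, mul_assoc, re_mul_comm]
    simp only [mul_assoc]
  rw [mul_dvd_normSq_add_smul_iff hf (hcross ▸ hre.neg_right), map_mul, mul_comm (normSq D)]

theorem coe_dvd_mul_left_iff_of_isCoprime (hf : IsCoprime f (normSq e)) {Z : ℍ[R]} :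
    (f : ℍ[R]) ∣ e * Z ↔ (f : ℍ[R]) ∣ Z := by
  refine ⟨fun h => coe_dvd_of_coe_dvd_smul hf ?_, fun h => coe_dvd_mul_left h e⟩
  rw [← coe_mul_eq_smul, ← star_mul_self, mul_assoc]
  exact coe_dvd_mul_left h _

theorem coe_dvd_mul_right_iff_of_isCoprime (hf : IsCoprime f (normSq e)) {Z : ℍ[R]} :
    (f : ℍ[R]) ∣ Z * e ↔ (f : ℍ[R]) ∣ Z := by
  rw [← coe_dvd_star, star_mul, coe_dvd_mul_left_iff_of_isCoprime (by rwa [normSq_star]),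
    coe_dvd_star]

theorem coe_dvd_star_mul_mul_iff_of_isCoprime (hf : IsCoprime f (normSq e)) {Z : ℍ[R]} :
    (f : ℍ[R]) ∣ star e * Z * e ↔ (f : ℍ[R]) ∣ Z := by
  rw [coe_dvd_mul_right_iff_of_isCoprime hf,
    coe_dvd_mul_left_iff_of_isCoprime (by rwa [normSq_star])]

end Cofactor

section LinearFactor

variable {R : Type*} [CommRing R] [IsDomain R] {c : R} {Q D e d : ℍ[R]} {n : ℕ}

theorem pow_mul_dvd_normSq_dual_iff (hN : Prime (normSq e)) (h2 : ¬normSq e ∣ 2)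
    (hQ : ¬((normSq e : R) : ℍ[R]) ∣ Q * e) (hd : star d = -d) (hed : e * d = d * star e)
    (hc : normSq e ^ n ∣ c) (hl : ((normSq e ^ n : R) : ℍ[R]) ∣ star e * (star Q * D) * e)
    (hr : ((normSq e ^ n : R) : ℍ[R]) ∣ normSq e • (D * star Q)) :
    c * normSq e ^ n ∣ normSq (D * e + c • (Q * d)) ↔ c * normSq e ^ n ∣ normSq e * normSq D := by
  refine mul_dvd_normSq_dual_iff hd hed hc ?_
  cases n with
  | zero => simp
  | succ n =>
    rw [pow_succ', coe_mul_dvd_smul_iff hN.ne_zero] at hr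
    exact pow_dvd_re_of_coe_pow_dvd hN h2 (fun h => hQ (coe_dvd_mul_left h Q)) hed hl
      (coe_pow_dvd_star_mul_of_dvd hN h2 hQ hl hr)

variable [IsPrincipalIdealRing R]

theorem NormDivisible.mul_right (h : NormDivisible c Q D) (hc : c ≠ 0) (hN : Prime (normSq e))
    (h2 : ¬normSq e ∣ 2) (hQ : ¬((normSq e : R) : ℍ[R]) ∣ Q * e) (hd : star d = -d)
    (hed : e * d = d * star e) : NormDivisible c (Q * e) (D * e + c • (Q * d)) := by
  refine normDivisible_of_pow_of_isCoprime hN hc (fun n hn hl hr => ?_) fun f hfN hf hl hr => ?_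
  · rw [coe_dvd_star_mul_dual_iff hn] at hl
    rw [coe_dvd_dual_mul_star_iff hn] at hr
    rw [pow_mul_dvd_normSq_dual_iff hN h2 hQ hd hed hn hl hr]
    cases n with
    | zero => simpa using h.dvd_normSq.mul_left _
    | succ n =>
      rw [pow_succ', coe_mul_dvd_smul_iff hN.ne_zero] at hr
      rw [pow_succ', mul_left_comm]
      exact mul_dvd_mul_left _ (h _ ((pow_dvd_pow _ n.le_succ).trans hn)
        (coe_pow_dvd_star_mul_of_dvd hN h2 hQ hl hr) hr)
  · have hl := (coe_dvd_star_mul_mul_iff_of_isCoprime hfN).1 ((coe_dvd_star_mul_dual_iff hf).1 hl)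
    have hr := coe_dvd_of_coe_dvd_smul hfN ((coe_dvd_dual_mul_star_iff hf).1 hr)
    rw [mul_dvd_normSq_dual_iff hd hed hf (dvd_re ((coe_dvd_mul_left hl _).mul_right d))]
    exact (h f hf hl hr).mul_left _

theorem NormDivisible.of_mul_right (h : NormDivisible c (Q * e) (D * e + c • (Q * d)))
    (hc : c ≠ 0) (hN : Prime (normSq e)) (h2 : ¬normSq e ∣ 2)
    (hQ : ¬((normSq e : R) : ℍ[R]) ∣ Q * e) (hd : star d = -d) (hed : e * d = d * star e) {m : ℕ}
    (hm : normSq e ^ (m + 1) ∣ c)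
    (hl : ((normSq e ^ (m + 1) : R) : ℍ[R]) ∣ star (Q * e) * (D * e + c • (Q * d)))
    (hr : ((normSq e ^ (m + 1) : R) : ℍ[R]) ∣ (D * e + c • (Q * d)) * star (Q * e))
    (hmax : ¬((normSq e ^ (m + 1) : R) : ℍ[R]) ∣ D * star Q) : NormDivisible c Q D := by
  have hpow {n : ℕ} (hn : n ≤ m) : c * normSq e ^ n ∣ normSq D := by
    have hdvd : normSq e ^ (n + 1) ∣ normSq e ^ (m + 1) := pow_dvd_pow _ (Nat.succ_le_succ hn)
    have hl := (coe_dvd_coe.2 hdvd).trans hl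
    have hr := (coe_dvd_coe.2 hdvd).trans hr
    have hc := hdvd.trans hm
    rw [← mul_dvd_mul_iff_left hN.ne_zero, mul_left_comm, ← pow_succ',
      ← pow_mul_dvd_normSq_dual_iff hN h2 hQ hd hed hc ((coe_dvd_star_mul_dual_iff hc).1 hl)
        ((coe_dvd_dual_mul_star_iff hc).1 hr)]
    exact h _ hc hl hr
  refine normDivisible_of_pow_of_isCoprime hN hc (fun n _ _ hr => hpow ?_) fun f hfN hf hl hr => ?_
  · exact Nat.lt_succ_iff.1 (not_le.1 fun hmn =>
      hmax ((coe_dvd_coe.2 (pow_dvd_pow _ hmn)).trans hr))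
  · have hl' : (f : ℍ[R]) ∣ star e * (star Q * D) := coe_dvd_mul_left hl _
    have hf' := h f hf ((coe_dvd_star_mul_dual_iff hf).2 (hl'.mul_right e))
      ((coe_dvd_dual_mul_star_iff hf).2 (coe_dvd_smul_of_coe_dvd _ hr))
    rw [mul_dvd_normSq_dual_iff hd hed hf (dvd_re (hl'.mul_right d))] at hf'
    rw [← mul_dvd_mul_iff_left hN.ne_zero, mul_left_comm]
    refine mul_dvd_of_isCoprime hfN.symm ?_ hf'
    rw [mul_comm]
    exact mul_dvd_mul_left _ (by simpa using hpow m.zero_le)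

theorem normDivisible_mul_star_iff (hN : Prime (normSq e)) (hd : star d = -d)
    (hQD : ¬((normSq e : R) : ℍ[R]) ∣ (D + c • (Q * d)) * e * star Q) :
    NormDivisible (normSq e * c) Q ((D + c • (Q * d)) * e) ↔ NormDivisible c (Q * star e) D := by
  have hright {f : R} (hf : f ∣ c) :
      (f : ℍ[R]) ∣ (D + c • (Q * d)) * e * star Q ↔ (f : ℍ[R]) ∣ D * star (Q * star e) := by
    rw [mul_assoc, star_mul, star_star, add_mul, smul_mul_assoc, dvd_add_left (coe_dvd_smul hf _)]
  have hleft {f : R} (hf : f ∣ c) :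
      (f : ℍ[R]) ∣ star Q * (D + c • (Q * d)) ↔ (f : ℍ[R]) ∣ star Q * D := by
    rw [mul_add, mul_smul_comm, dvd_add_left (coe_dvd_smul hf _)]
  have hcoprime {f : R} (hr : (f : ℍ[R]) ∣ (D + c • (Q * d)) * e * star Q) :
      IsCoprime f (normSq e) :=
    (hN.irreducible.coprime_iff_not_dvd.2 fun hNf => hQD ((coe_dvd_coe.2 hNf).trans hr)).symm
  have hnorm {f : R} (hf : f ∣ c) (hl : (f : ℍ[R]) ∣ star Q * D) :
      normSq e * c * f ∣ normSq ((D + c • (Q * d)) * e) ↔ c * f ∣ normSq D := by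
    rw [map_mul, mul_comm (normSq (D + _)), mul_assoc, mul_dvd_mul_iff_left hN.ne_zero]
    refine mul_dvd_normSq_add_smul_iff hf ?_
    rw [star_mul, hd, neg_mul, mul_neg, re_neg, dvd_neg, re_mul_comm, mul_assoc, re_mul_comm]
    exact dvd_re (hl.mul_right d)
  constructor
  · intro h f hf hl hr
    have hr := (hright hf).2 hr
    rw [star_mul, star_star, mul_assoc, coe_dvd_mul_left_iff_of_isCoprime (hcoprime hr)] at hl
    refine (hnorm hf hl).1 (h f (hf.mul_left _) ?_ hr)
    rw [← mul_assoc]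
    exact ((hleft hf).2 hl).mul_right e
  · intro h f hf hl hr
    have hfN := hcoprime hr
    have hf := hfN.dvd_of_dvd_mul_left hf
    rw [← mul_assoc, coe_dvd_mul_right_iff_of_isCoprime hfN, hleft hf] at hl
    refine (hnorm hf hl).2 (h f hf ?_ ((hright hf).1 hr))
    rw [star_mul, star_star, mul_assoc]
    exact coe_dvd_mul_left hl e

end LinearFactor

section Maximal

variable {R : Type*} [CommRing R] [IsDomain R] {c : R} {Q D e d : ℍ[R]} {n : ℕ}

theorem exists_eq_mul_of_coe_dvd_mul_mul_star (hN : Prime (normSq e)) (h2 : ¬normSq e ∣ 2)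
    (hD : ¬((normSq e : R) : ℍ[R]) ∣ D * e) (h : ((normSq e : R) : ℍ[R]) ∣ D * e * star Q) :
    ∃ Q', Q = Q' * e := by
  have h := (coe_dvd_mul_or_of_dvd_normSq hN h2 dvd_rfl h).resolve_left hD
  rwa [← coe_dvd_star, star_mul, star_star, coe_normSq_dvd_mul_star_iff hN.ne_zero] at h

theorem coe_pow_succ_dvd_dual_mul_star_iff (hN : normSq e ≠ 0)
    (h : ((normSq e ^ n : R) : ℍ[R]) ∣ D * star Q) :
    ((normSq e ^ (n + 1) : R) : ℍ[R]) ∣ (D * e + c • (Q * d)) * star (Q * e) ↔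
      ((normSq e ^ (n + 1) : R) : ℍ[R]) ∣ c • (Q * (d * star e) * star Q) := by
  have hexp : (D * e + c • (Q * d)) * star (Q * e) =
      normSq e • (D * star Q) + c • (Q * (d * star e) * star Q) := by
    rw [add_mul, star_mul, ← mul_assoc, mul_mul_star_self, smul_mul_assoc, smul_mul_assoc]
    simp only [mul_assoc]
  rw [hexp, dvd_add_right]
  rwa [pow_succ', coe_mul_dvd_smul_iff hN]

theorem not_coe_dvd_mul_mul_star (hN : Prime (normSq e)) (h2 : ¬normSq e ∣ 2)
    (hd : IsUnit (normSq d)) (hed : e * d = d * star e)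
    (hQ : ¬((normSq e : R) : ℍ[R]) ∣ Q * e) :
    ¬((normSq e : R) : ℍ[R]) ∣ Q * (d * star e) * star Q := by
  rw [← hed, ← mul_assoc, mul_assoc]
  intro h
  rcases coe_dvd_mul_or_of_dvd_normSq hN h2 dvd_rfl (by simpa only [mul_assoc] using h) with h | h
  · exact hQ h
  · have hcop : IsCoprime (normSq e) (normSq d) :=
      isCoprime_one_right.of_isCoprime_of_dvd_right hd.dvd
    rw [← mul_assoc, hed, mul_assoc, coe_dvd_mul_left_iff_of_isCoprime hcop, ← star_mul,
      coe_dvd_star] at h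
    exact hQ h

theorem exists_dual_not_coe_pow_dvd (hN : Prime (normSq e)) (h2 : ¬normSq e ∣ 2)
    (hd : IsUnit (normSq d)) (hed : e * d = d * star e)
    (hQ : ¬((normSq e : R) : ℍ[R]) ∣ Q * e)
    (hmax : ¬(normSq e ^ (n + 1) ∣ normSq e * c ∧
      ((normSq e ^ (n + 1) : R) : ℍ[R]) ∣ D * e * star (Q * e))) :
    ∃ d' D', (d' = 0 ∨ d' = d) ∧ D * e = D' * e + (normSq e * c) • (Q * d') ∧
      ¬((normSq e ^ n : R) : ℍ[R]) ∣ D' * star Q := by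
  by_cases hr : ((normSq e ^ (n + 1) : R) : ℍ[R]) ∣ D * e * star (Q * e)
  · refine ⟨d, _, .inr rfl, mul_eq_sub_smul_mul_add Q D d e c, fun h => hmax ⟨?_, hr⟩⟩
    rw [mul_eq_sub_smul_mul_add Q D d e c, coe_pow_succ_dvd_dual_mul_star_iff hN.ne_zero h] at hr
    exact coe_pow_dvd_of_coe_pow_dvd_smul hN (not_coe_dvd_mul_mul_star hN h2 hd hed hQ) hr
  · refine ⟨0, D, .inl rfl, by simp, fun h => hr ?_⟩
    have hiff := coe_pow_succ_dvd_dual_mul_star_iff (c := 0) (d := 0) hN.ne_zero h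
    rw [mul_zero, smul_zero, add_zero, zero_smul] at hiff
    exact hiff.2 (dvd_zero _)

end Maximal

section Reduced

variable {R : Type*} [CommRing R] {c c' : R} {Q Q' D e d : ℍ[R]}

/-- The motion polynomial `cQ + εD` is reduced, and so is `Q`. -/
structure IsReducedTriple (c : R) (Q D : ℍ[R]) : Prop where
  ne_zero : c ≠ 0
  not_coe_dvd_primal : ∀ p : R, Prime p → ¬(p : ℍ[R]) ∣ Q
  not_coe_dvd_dual : ∀ p : R, Prime p → p ∣ c → ¬(p : ℍ[R]) ∣ D

namespace IsReducedTriple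

protected theorem star (h : IsReducedTriple c Q D) : IsReducedTriple c (star Q) (star D) where
  ne_zero := h.ne_zero
  not_coe_dvd_primal p hp := mt coe_dvd_star.1 (h.not_coe_dvd_primal p hp)
  not_coe_dvd_dual p hp hpc := mt coe_dvd_star.1 (h.not_coe_dvd_dual p hp hpc)

theorem cofactor {x : ℍ[R]} (h : IsReducedTriple c Q (D * e + c' • x)) (hc : c' ∣ c)
    (hQ' : ∀ p : R, Prime p → ¬(p : ℍ[R]) ∣ Q') : IsReducedTriple c' Q' D where
  ne_zero := ne_zero_of_dvd_ne_zero h.ne_zero hc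
  not_coe_dvd_primal := hQ'
  not_coe_dvd_dual p hp hpc hpD :=
    h.not_coe_dvd_dual p hp (hpc.trans hc) ((hpD.mul_right e).add (coe_dvd_smul hpc x))

theorem of_mul_right (h : IsReducedTriple c (Q * e) (D * e + c • (Q * d))) :
    IsReducedTriple c Q D :=
  h.cofactor dvd_rfl fun p hp hpQ => h.not_coe_dvd_primal p hp (hpQ.mul_right e)

theorem mul_star [IsDomain R] [IsPrincipalIdealRing R]
    (h : IsReducedTriple (normSq e * c) Q ((D + c • (Q * d)) * e))
    (hN : Prime (normSq e)) (hQ : ¬((normSq e : R) : ℍ[R]) ∣ Q * star e) :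
    IsReducedTriple c (Q * star e) D := by
  rw [add_mul, smul_mul_assoc] at h
  refine h.cofactor (dvd_mul_left _ _) fun p hp hpQ => ?_
  have hcop : IsCoprime p (normSq e) := hp.irreducible.coprime_iff_not_dvd.2 fun hpe =>
    hQ ((coe_dvd_coe.2 (hp.dvd_prime_iff_associated hN |>.1 hpe).symm.dvd).trans hpQ)
  exact h.not_coe_dvd_primal p hp
    ((coe_dvd_mul_right_iff_of_isCoprime (by rwa [normSq_star])).1 hpQ)

end IsReducedTriple

end Reduced

section Transport

variable {R S : Type*} [CommRing R] [CommRing S]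

/-- The ring homomorphism of quaternion algebras applying `f` to each of the four components. -/
@[simps]
def mapQuaternion (f : R →+* S) : ℍ[R] →+* ℍ[S] where
  toFun q := ofComponents (f q.re) (f q.imI) (f q.imJ) (f q.imK)
  map_one' := by ext <;> simp
  map_zero' := by ext <;> simp
  map_add' p q := by ext <;> simp
  map_mul' p q := by ext <;> simp

theorem mapQuaternion_star (f : R →+* S) (q : ℍ[R]) :
    mapQuaternion f (star q) = star (mapQuaternion f q) := by
  ext <;> simp

theorem mapQuaternion_coe (f : R →+* S) (r : R) :
    mapQuaternion f (r : ℍ[R]) = (f r : ℍ[S]) := by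
  ext <;> simp

theorem normSq_mapQuaternion (f : R →+* S) (q : ℍ[R]) :
    normSq (mapQuaternion f q) = f (normSq q) := by
  simp [normSq_def']

/-- `ℍ[R]` with the operations of `R` taken from its commutative ring structure. For `R = ℝ[t]`
this differs from `ℍ[ℝ[t]]` by an unfolding of instances which would block rewriting. -/
abbrev Quat (R : Type*) [CommRing R] : Type _ := ℍ[R]

/-- A constant quaternion, regarded as a quaternion with polynomial components. -/
abbrev const : ℍ[R] →+* Quat R[X] := mapQuaternion C

/-- The ring homomorphism `ℍ[R][X] → Quat R[X]` fixing the indeterminate. -/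
def componentsHom : ℍ[R][X] →+* Quat R[X] :=
  eval₂RingHom' const ((X : R[X]) : Quat R[X]) fun q => (coe_commutes X (const q)).symm

theorem componentsHom_C (q : ℍ[R]) : componentsHom (C q) = const q :=
  eval₂_C _ _

theorem componentsHom_X : componentsHom (X : ℍ[R][X]) = ((X : R[X]) : Quat R[X]) :=
  eval₂_X _ _

theorem componentsHom_monomial (n : ℕ) (q : ℍ[R]) :
    componentsHom (monomial n q) = (X ^ n : R[X]) • const q := by
  rw [← C_mul_X_pow_eq_monomial, map_mul, map_pow, componentsHom_C, componentsHom_X,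
    ← Quaternion.coe_pow, mul_coe_eq_smul]

theorem componentsHom_map (f : R[X]) :
    componentsHom (f.map (algebraMap R ℍ[R])) = (f : Quat R[X]) := by
  induction f using Polynomial.induction_on' with
  | add f g hf hg => rw [Polynomial.map_add, map_add, hf, hg, Quaternion.coe_add]
  | monomial n r =>
    rw [map_monomial, componentsHom_monomial, Quaternion.algebraMap_def, mapQuaternion_coe,
    smul_coe,   mul_comm, C_mul_X_pow_eq_monomial]

theorem coeff_componentsHom (A : ℍ[R][X]) (n : ℕ) :
    A.coeff n = ofComponents ((componentsHom A).re.coeff n) ((componentsHom A).imI.coeff n)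
      ((componentsHom A).imJ.coeff n) ((componentsHom A).imK.coeff n) := by
  induction A using Polynomial.induction_on' with
  | add A B hA hB =>
    rw [coeff_add, hA, hB, map_add]
    ext <;> simp
  | monomial k q =>
    rw [componentsHom_monomial, coeff_monomial]
    rcases eq_or_ne n k with rfl | hnk
    · ext <;> simp
    · ext <;> simp [hnk, hnk.symm]

theorem componentsHom_bijective : Function.Bijective (componentsHom (R := R)) := by
  constructor
  · intro A B h
    ext1 n
    rw [coeff_componentsHom, coeff_componentsHom, h]
  · intro B
    refine ⟨B.re.map (algebraMap R ℍ[R])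
      + B.imI.map (algebraMap R ℍ[R]) * C (ofComponents 0 1 0 0)
      + B.imJ.map (algebraMap R ℍ[R]) * C (ofComponents 0 0 1 0)
      + B.imK.map (algebraMap R ℍ[R]) * C (ofComponents 0 0 0 1), ?_⟩
    simp only [map_add, map_mul, componentsHom_map, componentsHom_C, coe_mul_eq_smul]
    ext <;> simp

end Transport

section Dual

theorem coeff_cstar {R : Type*} [Semiring R] [Star R] (h0 : star (0 : R) = 0) (A : R[X]) (n : ℕ) :
    (cstar A).coeff n = star (A.coeff n) := by
  simp only [cstar, sum_def, finsetSum_coeff, coeff_C_mul_X_pow, Finset.sum_ite_eq, mem_support_iff]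
  split_ifs with h
  · rfl
  · rw [notMem_support_iff.1 h, h0]

/-- The identification of `ℍ[t]` with the quaternions over `ℝ[t]`. -/
def components : Hq[X] ≃+* Quat ℝ[X] :=
  RingEquiv.ofBijective componentsHom componentsHom_bijective

/-- The monic linear polynomial `t - p`, regarded as a quaternion with polynomial components. -/
def linear (p : Hq) : Quat ℝ[X] := ((X : ℝ[X]) : Quat ℝ[X]) - const p

theorem components_X_sub_C (p : Hq) : components (X - C p) = linear p := by
  rw [map_sub]
  exact congrArg₂ _ componentsHom_X (componentsHom_C p)

theorem star_linear (p : Hq) : star (linear p) = linear (star p) := by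
  rw [linear, star_sub, star_coe, ← mapQuaternion_star, linear]

theorem components_C (q : Hq) : components (C q) = const q :=
  componentsHom_C q

theorem components_qPoly (f : ℝ[X]) : components (qPoly f) = (f : Quat ℝ[X]) :=
  componentsHom_map f

theorem components_cstar (A : Hq[X]) : components (cstar A) = star (components A) := by
  have hstar (n : ℕ) : components (monomial n (star (A.coeff n))) =
      star (components (monomial n (A.coeff n))) := by
    change componentsHom _ = star (componentsHom _)
    rw [componentsHom_monomial, componentsHom_monomial, mapQuaternion_star, Quaternion.star_smul]
  rw [cstar, sum_def, map_sum]
  simp only [C_mul_X_pow_eq_monomial, hstar]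
  conv_rhs => rw [A.as_sum_support, map_sum]
  exact (star_sum (R := Quat ℝ[X]) _ _).symm

theorem rDvdQ_iff (f : ℝ[X]) (A : Hq[X]) : RDvdQ f A ↔ (f : Quat ℝ[X]) ∣ components A := by
  rw [← components_qPoly, map_dvd_iff]
  rfl

theorem coeff_mp (P D : Hq[X]) (n : ℕ) :
    (mp P D).coeff n = inl (P.coeff n) + inr (D.coeff n) := by
  rw [mp, coeff_add, coeff_C_mul, dhQ, dhQ, coeff_map, coeff_map]
  ext <;> simp

theorem primal_mp (P D : Hq[X]) : primal (mp P D) = P := by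
  ext1 n
  simp [primal, coeff_mp]

theorem mp_inj {P D P' D' : Hq[X]} : mp P D = mp P' D' ↔ P = P' ∧ D = D' := by
  simp only [Polynomial.ext_iff, coeff_mp, TrivSqZeroExt.ext_iff]
  simp [forall_and]

theorem mul_C_eps (A : DHq[X]) : A * C ε = C ε * A := by
  ext1 n
  rw [coeff_mul_C, coeff_C_mul]
  exact (commute_eps_left _).symm

theorem mp_mul (P D P' D' : Hq[X]) : mp P D * mp P' D' = mp (P * P') (P * D' + D * P') := by
  have hmul (A B : Hq[X]) : dhQ (A * B) = dhQ A * dhQ B := Polynomial.map_mul _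
  have hadd (A B : Hq[X]) : dhQ (A + B) = dhQ A + dhQ B := Polynomial.map_add _
  have hprimal : dhQ P * (C ε * dhQ D') = C ε * (dhQ P * dhQ D') := by
    rw [← mul_assoc, mul_C_eps, mul_assoc]
  have hdual : C ε * dhQ D * (C ε * dhQ D') = 0 := by
    rw [mul_assoc, ← mul_assoc (dhQ D), mul_C_eps, mul_assoc (C ε) (dhQ D), ← mul_assoc, ← C_mul,
      eps_mul_eps, C_0, zero_mul]
  simp only [mp, hmul, hadd, add_mul, mul_add, hprimal, hdual, mul_assoc, add_zero]
  abel

theorem star_zero_dual : star (0 : DHq) = 0 := by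
  change inl (star (0 : Hq)) + inr (star (0 : Hq)) = (0 : DHq)
  simp

theorem cstar_mp (P D : Hq[X]) : cstar (mp P D) = mp (cstar P) (cstar D) := by
  ext1 n
  rw [coeff_cstar star_zero_dual, coeff_mp, coeff_mp, coeff_cstar (star_zero Hq),
    coeff_cstar (star_zero Hq)]
  change inl (star _) + inr (star _) = (_ : DHq)
  simp

/-- The dual quaternion polynomial with primal part `P` and dual part `D`, both given as
quaternions over `ℝ[t]`. -/
def dual (P D : Quat ℝ[X]) : DHq[X] := mp (components.symm P) (components.symm D)

theorem mp_eq_dual (P D : Hq[X]) : mp P D = dual (components P) (components D) := by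
  simp [dual]

theorem dual_inj {P D P' D' : Quat ℝ[X]} : dual P D = dual P' D' ↔ P = P' ∧ D = D' := by
  simp [dual, mp_inj]

theorem dual_mul (P D P' D' : Quat ℝ[X]) :
    dual P D * dual P' D' = dual (P * P') (P * D' + D * P') := by
  simp [dual, mp_mul]

theorem one_eq_dual : (1 : DHq[X]) = dual 1 0 := by
  simp [dual, mp, dhQ]

theorem dPoly_eq_dual (f : ℝ[X]) : dPoly f = dual f 0 := by
  rw [← components_qPoly, ← map_zero components, ← mp_eq_dual]
  simp [dPoly, mp, dhQ]

theorem cstar_dual (P D : Quat ℝ[X]) : cstar (dual P D) = dual (star P) (star D) := by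
  rw [dual, cstar_mp, mp_eq_dual, components_cstar, components_cstar, RingEquiv.apply_symm_apply,
    RingEquiv.apply_symm_apply]

theorem X_sub_C_eq_dual (h : DHq) :
    (X - C h : DHq[X]) = dual (linear h.fst) (-const h.snd) := by
  rw [← components_X_sub_C, ← components_C, ← map_neg, ← mp_eq_dual]
  ext1 n
  rw [coeff_mp]
  ext <;> simp [coeff_X, coeff_C] <;> split_ifs <;> simp

theorem exists_prod_X_sub_C_eq_dual (L : List DHq) :
    ∃ P D, (L.map fun h => (X - C h : DHq[X])).prod = dual P D := by
  induction L with
  | nil => exact ⟨1, 0, one_eq_dual⟩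
  | cons h L ih =>
    obtain ⟨P, D, hPD⟩ := ih
    rw [List.map_cons, List.prod_cons, hPD, X_sub_C_eq_dual, dual_mul]
    exact ⟨_, _, rfl⟩

theorem isMotion_dual_iff {P D : Quat ℝ[X]} :
    IsMotion (dual P D) ↔ normSq P ≠ 0 ∧ (star P * D).re = 0 := by
  have htrace : P * star D + D * star P = 0 ↔ (star P * D).re = 0 := by
    rw [re_mul_comm, add_comm, ← star_star P, ← star_mul, star_star, add_star_eq_smul_one,
      ← coe_mul_eq_smul, mul_one, ← Quaternion.coe_zero, Quaternion.coe_inj]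
    simp
  simp only [IsMotion, cstar_dual, dual_mul, dPoly_eq_dual, dual_inj, htrace, self_mul_star]
  exact ⟨fun ⟨f, hf, hPf, hPD⟩ => ⟨(Quaternion.coe_inj.1 hPf).trans_ne hf, hPD⟩,
    fun ⟨hP, hPD⟩ => ⟨_, hP, rfl, hPD⟩⟩

end Dual

theorem coe_X_sub_C_dvd_iff {R : Type*} [CommRing R] {a : R} {A : Quat R[X]} :
    ((X - C a : R[X]) : Quat R[X]) ∣ A ↔ mapQuaternion (evalRingHom a) A = 0 := by
  rw [coe_dvd_iff, Quaternion.ext_iff]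
  simp [dvd_iff_isRoot]

theorem coe_X_sub_C_dvd_of_isRoot_normSq {a : ℝ} {A : Quat ℝ[X]} (h : (normSq A).IsRoot a) :
    ((X - C a : ℝ[X]) : Quat ℝ[X]) ∣ A := by
  rw [coe_X_sub_C_dvd_iff, ← normSq_eq_zero, normSq_mapQuaternion]
  exact h

theorem natDegree_eq_two_of_dvd_normSq {N : ℝ[X]} (hN : Irreducible N) {A : Quat ℝ[X]}
    (hdvd : N ∣ normSq A) (hndvd : ¬(N : Quat ℝ[X]) ∣ A) : N.natDegree = 2 := by
  have hpos := hN.natDegree_pos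
  have hle := hN.natDegree_le_two
  suffices N.natDegree ≠ 1 by omega
  intro h1
  obtain ⟨a, ha⟩ := exists_root_of_degree_eq_one ((degree_eq_iff_natDegree_eq hN.ne_zero).2 h1)
  have hassoc : Associated (X - C a) N :=
    (irreducible_X_sub_C a).associated_of_dvd hN (dvd_iff_isRoot.2 ha)
  exact hndvd ((coe_dvd_coe.2 hassoc.symm.dvd).trans
    (coe_X_sub_C_dvd_of_isRoot_normSq (ha.dvd hdvd)))

/-- A pair `(e, d)` consisting of the primal and the dual part of a monic linear motion
polynomial. -/
structure IsLinearFactor (e d : Quat ℝ[X]) : Prop where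
  exists_eq_linear : ∃ p : Hq, e = linear p
  exists_eq_const : ∃ q : Hq, d = const q
  re_star_mul : (star e * d).re = 0

theorem linear_eq_ofComponents (p : Hq) :
    linear p = ofComponents (X - C p.re) (-C p.imI) (-C p.imJ) (-C p.imK) := by
  ext <;> simp [linear]

theorem normSq_linear (p : Hq) :
    normSq (linear p) = C 1 * X ^ 2 + C (-2 * p.re) * X + C (normSq p) := by
  rw [linear_eq_ofComponents, normSq_def', normSq_def']
  simp only [ofComponents, map_neg, map_add, map_mul, map_pow, map_one, map_ofNat C 2]
  ring

theorem monic_normSq_linear (p : Hq) :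
    (normSq (linear p)).Monic := by
  rw [normSq_linear, Monic, leadingCoeff_quadratic one_ne_zero]

theorem natDegree_normSq_linear (p : Hq) :
    (normSq (linear p)).natDegree = 2 := by
  rw [normSq_linear, natDegree_quadratic one_ne_zero]

theorem re_star_linear_mul_const (p q : Hq) :
    (star (linear p) * const q).re = C q.re * X + C (-(star p * q).re) := by
  rw [star_linear, linear_eq_ofComponents, re_mul, re_mul]
  simp only [ofComponents, mapQuaternion_apply, re_star, imI_star, imJ_star, imK_star, map_neg,
    map_sub, map_mul]
  ring

namespace IsLinearFactor

variable {e d : Quat ℝ[X]}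

theorem monic_normSq (h : IsLinearFactor e d) : (normSq e).Monic := by
  obtain ⟨p, rfl⟩ := h.exists_eq_linear
  exact monic_normSq_linear p

theorem natDegree_normSq (h : IsLinearFactor e d) : (normSq e).natDegree = 2 := by
  obtain ⟨p, rfl⟩ := h.exists_eq_linear
  exact natDegree_normSq_linear p

theorem star_right (h : IsLinearFactor e d) : star d = -d := by
  obtain ⟨⟨p, rfl⟩, ⟨q, rfl⟩, hre⟩ := h
  rw [re_star_linear_mul_const] at hre
  have hq : q.re = 0 := by simpa using congrArg (coeff · 1) hre
  rw [star_eq_neg]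
  simp [hq]

theorem star_mul_eq (h : IsLinearFactor e d) : star e * d = d * e :=
  star_mul_eq_mul_self h.star_right h.re_star_mul

theorem mul_eq_mul_star (h : IsLinearFactor e d) : e * d = d * star e :=
  mul_eq_mul_star_of_star_mul_eq h.star_mul_eq

protected theorem star (h : IsLinearFactor e d) : IsLinearFactor (star e) (star d) := by
  refine ⟨?_, ?_, ?_⟩
  · obtain ⟨p, rfl⟩ := h.exists_eq_linear
    exact ⟨star p, star_linear p⟩
  · obtain ⟨q, rfl⟩ := h.exists_eq_const
    exact ⟨star q, (mapQuaternion_star _ _).symm⟩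
  · rw [← star_mul, re_star, re_mul_comm]
    exact h.re_star_mul

theorem exists_isUnit_normSq (h : IsLinearFactor e d) :
    ∃ d', IsLinearFactor e d' ∧ IsUnit (normSq d') := by
  obtain ⟨p, rfl⟩ := h.exists_eq_linear
  obtain ⟨q, hq, hre, hpq⟩ : ∃ q : Hq, q ≠ 0 ∧ q.re = 0 ∧ (star p * q).re = 0 := by
    by_cases hp : p.imI = 0 ∧ p.imJ = 0
    · refine ⟨ofComponents 0 1 0 0, ?_, rfl, by simp [hp.1]⟩
      exact fun h => one_ne_zero (congrArg QuaternionAlgebra.imI h)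
    · refine ⟨ofComponents 0 p.imJ (-p.imI) 0, fun h => hp ?_, rfl, ?_⟩
      · exact ⟨neg_eq_zero.1 (congrArg QuaternionAlgebra.imJ h), congrArg QuaternionAlgebra.imI h⟩
      · simp [mul_comm p.imI]
  refine ⟨const q, ⟨⟨p, rfl⟩, ⟨q, rfl⟩, ?_⟩, ?_⟩
  · rw [re_star_linear_mul_const, hre, hpq]
    simp
  · rw [normSq_mapQuaternion]
    exact (normSq_ne_zero.2 hq).isUnit.map C

theorem isMotion (h : IsLinearFactor e d) : IsMotion (dual e d) :=
  isMotion_dual_iff.2 ⟨h.monic_normSq.ne_zero, h.re_star_mul⟩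

theorem exists_eq_X_sub_C (h : IsLinearFactor e d) :
    ∃ x : DHq, dual e d = X - C x := by
  obtain ⟨⟨p, rfl⟩, ⟨q, rfl⟩, -⟩ := h
  exact ⟨inl p + inr (-q), (X_sub_C_eq_dual _).symm ▸ by simp [-mapQuaternion_apply]⟩

end IsLinearFactor

theorem isLinearFactor_of_isMotion {x : DHq} (h : IsMotion (X - C x)) :
    IsLinearFactor (linear x.fst) (-const x.snd) := by
  rw [X_sub_C_eq_dual, isMotion_dual_iff] at h
  exact ⟨⟨_, rfl⟩, ⟨-x.snd, (map_neg _ _).symm⟩, h.2⟩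

section RightFactor

theorem exists_eq_mul_add_const (p : Hq) (A : Quat ℝ[X]) :
    ∃ B b, A = B * linear p + const b := by
  obtain ⟨b, hb⟩ := natDegree_eq_zero.1 (Nat.lt_one_iff.1
    (natDegree_modByMonic_lt (components.symm (star A)) (monic_X_sub_C (star p))
      (fun h => one_ne_zero ((natDegree_X_sub_C (star p)).symm.trans (h ▸ natDegree_one)))
      |>.trans_eq (natDegree_X_sub_C _)))
  have hA := congrArg (star ∘ components)
    (modByMonic_add_div (components.symm (star A)) (X - C (star p)))
  simp only [Function.comp_apply, ← hb, map_add, map_mul, components_C, components_X_sub_C,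
    RingEquiv.apply_symm_apply, star_star, star_add, star_mul, star_linear,
    ← mapQuaternion_star] at hA
  exact ⟨_, star b, by rw [← hA, add_comm]⟩

theorem exists_eq_coe_mul_add {N : ℝ[X]} (hN : N.Monic) (hdeg : N.natDegree = 2)
    (A : Quat ℝ[X]) :
    ∃ B a b, A = (N : Quat ℝ[X]) * B + (const a * ((X : ℝ[X]) : Quat ℝ[X]) + const b) := by
  have hmonic : (qPoly N).Monic := hN.map _
  have hdeg' : (qPoly N).natDegree = 2 := (hN.natDegree_map _).trans hdeg
  have hlt := natDegree_modByMonic_lt (components.symm A) hmonic fun h => by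
    rw [h, natDegree_one] at hdeg'
    omega
  obtain ⟨a, b, hab⟩ := exists_eq_X_add_C_of_natDegree_le_one
    (Nat.le_of_lt_succ (hlt.trans_eq hdeg'))
  have hA := congrArg components (modByMonic_add_div (components.symm A) (qPoly N))
  have hX : components X = ((X : ℝ[X]) : Quat ℝ[X]) := componentsHom_X
  rw [hab, RingEquiv.apply_symm_apply, map_add, map_mul, components_qPoly, map_add, map_mul,
    components_C, components_C, hX] at hA
  exact ⟨_, a, b, by rw [← hA, add_comm]⟩

theorem dvd_normSq_const_mul_iff {N : ℝ[X]} {a : Hq} (ha : a ≠ 0) {A : Quat ℝ[X]} :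
    N ∣ normSq (const a * A) ↔ N ∣ normSq A := by
  rw [map_mul, normSq_mapQuaternion]
  exact ((normSq_ne_zero.2 ha).isUnit.map C).dvd_mul_left

theorem exists_eq_mul_linear {N : ℝ[X]} (hN : N.Monic) (hirr : Irreducible N)
    {A : Quat ℝ[X]} (hdvd : N ∣ normSq A) (hndvd : ¬(N : Quat ℝ[X]) ∣ A) :
    ∃ p A', normSq (linear p) = N ∧ A = A' * linear p := by
  have hdeg := natDegree_eq_two_of_dvd_normSq hirr hdvd hndvd
  obtain ⟨B, a, b, rfl⟩ := exists_eq_coe_mul_add hN hdeg A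
  rw [add_comm, coe_mul_eq_smul] at hdvd hndvd ⊢
  rw [normSq_add_smul, dvd_add_left (dvd_mul_right _ _)] at hdvd
  have ha : a ≠ 0 := by
    rintro rfl
    rw [map_zero, zero_mul, zero_add, normSq_mapQuaternion] at hdvd
    have hb : C (normSq b) = 0 :=
      eq_zero_of_dvd_of_natDegree_lt hdvd (by rw [natDegree_C, hdeg]; exact two_pos)
    obtain rfl : b = 0 := normSq_eq_zero.1 (C_eq_zero.1 hb)
    rw [map_zero, zero_mul, zero_add, zero_add] at hndvd
    exact hndvd (coe_dvd_smul dvd_rfl B)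
  have hlin : const a * ((X : ℝ[X]) : Quat ℝ[X]) + const b =
      const a * linear (-(a⁻¹ * b)) := by
    rw [linear, mul_sub, ← map_mul, mul_neg, mul_inv_cancel_left₀ ha, map_neg, sub_neg_eq_add]
  rw [hlin, dvd_normSq_const_mul_iff ha] at hdvd
  have hnorm := (eq_of_monic_of_dvd_of_natDegree_le hN (monic_normSq_linear _) hdvd
    ((natDegree_normSq_linear _).trans_le hdeg.ge))
  refine ⟨_, const a + B * star (linear (-(a⁻¹ * b))), hnorm, ?_⟩
  rw [hlin, add_mul, mul_star_mul_self, hnorm]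

theorem exists_dual_eq_mul_linear_add {p : Hq} {P D : Quat ℝ[X]}
    (hP : ¬((normSq (linear p) : ℝ[X]) : Quat ℝ[X]) ∣ P * linear p)
    (hdvd : normSq (linear p) ∣ (star (P * linear p) * D).re) :
    ∃ d D', IsLinearFactor (linear p) d ∧ D = D' * linear p + P * d := by
  obtain ⟨B, a, rfl⟩ : ∃ B a, P = B * star (linear p) + const a := by
    simpa only [star_linear] using exists_eq_mul_add_const (star p) P
  obtain ⟨E, q, rfl⟩ := exists_eq_mul_add_const p D
  have ha : a ≠ 0 := by
    rintro rfl
    refine hP ?_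
    rw [map_zero, add_zero, mul_star_mul_self]
    exact coe_dvd_smul dvd_rfl B
  obtain ⟨q, rfl⟩ : ∃ b, q = a * b := ⟨a⁻¹ * q, (mul_inv_cancel_left₀ ha q).symm⟩
  rw [map_mul, re_star_mul_mul_add, dvd_add_right (dvd_mul_right _ _), normSq_mapQuaternion,
    ((normSq_ne_zero.2 ha).isUnit.map C).dvd_mul_left, re_star_linear_mul_const] at hdvd
  have hlinear : IsLinearFactor (linear p) (const q) := by
    refine ⟨⟨p, rfl⟩, ⟨_, rfl⟩, ?_⟩
    rw [re_star_linear_mul_const]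
    exact eq_zero_of_dvd_of_natDegree_lt hdvd
      (natDegree_linear_le.trans_lt (by rw [natDegree_normSq_linear]; exact one_lt_two))
  refine ⟨_, E - B * const q, hlinear, ?_⟩
  have hcomm : star (linear p) * const q = const q * linear p := hlinear.star_mul_eq
  rw [add_mul, mul_assoc, hcomm, sub_mul, mul_assoc, map_mul]
  abel

end RightFactor

section Splitting

variable {c : ℝ[X]} {Q D e d : Quat ℝ[X]}

theorem not_dvd_two {N : ℝ[X]} (hN : Irreducible N) : ¬N ∣ 2 := by
  have h2 : IsUnit (2 : ℝ[X]) := (isUnit_of_invertible (2 : ℝ)).map C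
  exact fun h => hN.not_isUnit (isUnit_of_dvd_unit h h2)

/-- The motion polynomial `cQ + εD` splits off a linear motion polynomial on the right, leaving a
cofactor `c'Q' + εD'` which is again reduced, has reduced `Q'` and satisfies the norm condition. -/
def SplitsOffRight (c : ℝ[X]) (Q D : Quat ℝ[X]) : Prop :=
  ∃ c' Q' D' e d, IsLinearFactor e d ∧ dual (c • Q) D = dual (c' • Q') D' * dual e d ∧
    IsReducedTriple c' Q' D' ∧ NormDivisible c' Q' D'

theorem splitsOffRight_of_eq_mul {c' : ℝ[X]} {Q' D' : Quat ℝ[X]} (he : IsLinearFactor e d)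
    (hQ : c • Q = (c' • Q') * e) (hD : D = D' * e + c' • (Q' * d))
    (hred : IsReducedTriple c' Q' D') (h : NormDivisible c' Q' D') : SplitsOffRight c Q D := by
  refine ⟨c', Q', D', e, d, he, ?_, hred, h⟩
  rw [dual_mul, dual_inj, smul_mul_assoc, smul_mul_assoc, ← smul_mul_assoc, add_comm]
  exact ⟨hQ, hD⟩

theorem splitsOffRight_of_isUnit (hc : IsUnit c) (hred : IsReducedTriple c Q D)
    (hQ : ¬IsUnit (normSq Q)) (hre : (star (c • Q) * D).re = 0) : SplitsOffRight c Q D := by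
  obtain ⟨N, hN, hirr, hNQ⟩ := exists_monic_irreducible_factor _ hQ
  obtain ⟨p, Q', rfl, rfl⟩ :=
    exists_eq_mul_linear hN hirr hNQ (hred.not_coe_dvd_primal N hirr.prime)
  have hndvd : ¬((normSq (linear p) : ℝ[X]) : Quat ℝ[X]) ∣ c • Q' * linear p := by
    rw [smul_mul_assoc]
    refine fun h => hred.not_coe_dvd_primal _ hirr.prime
      (coe_dvd_of_coe_dvd_smul (isCoprime_one_right.of_isCoprime_of_dvd_right hc.dvd) h)
  obtain ⟨d, D', he, rfl⟩ := exists_dual_eq_mul_linear_add (D := D) hndvd (by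
    rw [smul_mul_assoc, hre]
    exact dvd_zero _)
  rw [smul_mul_assoc] at hred ⊢
  exact splitsOffRight_of_eq_mul he (smul_mul_assoc _ _ _).symm rfl hred.of_mul_right
    (normDivisible_of_isUnit hc)

theorem splitsOffRight_of_not_coe_dvd (hN : Irreducible (normSq e)) (he : IsLinearFactor e 0)
    (hred : IsReducedTriple (normSq e * c) Q (D * e)) (h : NormDivisible (normSq e * c) Q (D * e))
    (hQD : ¬((normSq e : ℝ[X]) : Quat ℝ[X]) ∣ D * e * star Q) :
    SplitsOffRight (normSq e * c) Q (D * e) := by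
  have hQ : ¬((normSq e : ℝ[X]) : Quat ℝ[X]) ∣ Q * star e := by
    rw [coe_normSq_dvd_mul_star_iff hN.ne_zero]
    rintro ⟨Q', rfl⟩
    refine hQD ?_
    rw [star_mul, ← mul_assoc, mul_mul_star_self, smul_mul_assoc]
    exact coe_dvd_smul dvd_rfl _
  have hadd (A B : Quat ℝ[X]) : A + c • (B * 0) = A := by rw [mul_zero, smul_zero, add_zero]
  have hred' : IsReducedTriple c (Q * star e) D :=
    .mul_star (d := 0) (by rwa [hadd]) hN.prime hQ
  have h' : NormDivisible c (Q * star e) D :=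
    (normDivisible_mul_star_iff (d := 0) hN.prime (star_zero _ |>.trans neg_zero.symm)
      (by rwa [hadd])).1 (by rwa [hadd])
  refine splitsOffRight_of_eq_mul he ?_ (hadd _ _).symm hred' h'
  rw [smul_mul_assoc, mul_star_mul_self, smul_smul, mul_comm]

theorem splitsOffRight_of_coe_pow_dvd (hN : Irreducible (normSq e)) (he : IsLinearFactor e 0)
    (hred : IsReducedTriple (normSq e * c) Q (D * e)) (h : NormDivisible (normSq e * c) Q (D * e))
    {m : ℕ} (hm : normSq e ^ (m + 1) ∣ normSq e * c)
    (hl : ((normSq e ^ (m + 1) : ℝ[X]) : Quat ℝ[X]) ∣ star Q * (D * e))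
    (hr : ((normSq e ^ (m + 1) : ℝ[X]) : Quat ℝ[X]) ∣ D * e * star Q)
    (hmax : ¬(normSq e ^ (m + 1 + 1) ∣ normSq e * c ∧
      ((normSq e ^ (m + 1 + 1) : ℝ[X]) : Quat ℝ[X]) ∣ D * e * star Q)) :
    SplitsOffRight (normSq e * c) Q (D * e) := by
  have h2 := not_dvd_two hN
  obtain ⟨Q, rfl⟩ := exists_eq_mul_of_coe_dvd_mul_mul_star hN.prime h2
    (hred.not_coe_dvd_dual _ hN.prime (dvd_mul_right _ _))
    ((coe_dvd_coe.2 (dvd_pow_self _ m.succ_ne_zero)).trans hr)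
  have hQ := hred.not_coe_dvd_primal _ hN.prime
  obtain ⟨d, hd, hunit⟩ := he.exists_isUnit_normSq
  obtain ⟨d', D', hd', hD, hmax'⟩ :=
    exists_dual_not_coe_pow_dvd hN.prime h2 hunit hd.mul_eq_mul_star hQ hmax
  have he' : IsLinearFactor e d' := by rcases hd' with rfl | rfl <;> assumption
  rw [hD] at hred h hl hr ⊢
  exact splitsOffRight_of_eq_mul he' (smul_mul_assoc _ _ _).symm rfl hred.of_mul_right
    (h.of_mul_right hred.ne_zero hN.prime h2 hQ he'.star_right he'.mul_eq_mul_star hm hl hr hmax')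

theorem splitsOffRight_of_maximal {N : ℝ[X]} (hN : N.Monic) (hirr : Irreducible N) (hNc : N ∣ c)
    (hred : IsReducedTriple c Q D) (h : NormDivisible c Q D) {m : ℕ} (hm : N ^ m ∣ c)
    (hl : ((N ^ m : ℝ[X]) : Quat ℝ[X]) ∣ star Q * D)
    (hr : ((N ^ m : ℝ[X]) : Quat ℝ[X]) ∣ D * star Q)
    (hmax : ¬(N ^ (m + 1) ∣ c ∧ ((N ^ (m + 1) : ℝ[X]) : Quat ℝ[X]) ∣ D * star Q)) :
    SplitsOffRight c Q D := by
  obtain ⟨p, D, rfl, rfl⟩ := exists_eq_mul_linear hN hirr (hNc.trans h.dvd_normSq)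
    (hred.not_coe_dvd_dual N hirr.prime hNc)
  obtain ⟨c, rfl⟩ := hNc
  have he : IsLinearFactor (linear p) 0 := ⟨⟨p, rfl⟩, ⟨0, (map_zero _).symm⟩, by simp⟩
  cases m with
  | zero => exact splitsOffRight_of_not_coe_dvd hirr he hred h (by simpa using hmax)
  | succ m => exact splitsOffRight_of_coe_pow_dvd hirr he hred h hm hl hr hmax

theorem splitsOffRight_or_star (hred : IsReducedTriple c Q D) (h : NormDivisible c Q D)
    (hM : IsMotion (dual (c • Q) D)) (hunit : ¬IsUnit (normSq (c • Q))) :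
    SplitsOffRight c Q D ∨ SplitsOffRight c (star Q) (star D) := by
  by_cases hc : IsUnit c
  · refine .inl (splitsOffRight_of_isUnit hc hred (fun hQ => hunit ?_) (isMotion_dual_iff.1 hM).2)
    rw [normSq_smul]
    exact (hc.pow 2).mul hQ
  obtain ⟨N, hN, hirr, hNc⟩ := exists_monic_irreducible_factor c hc
  have hfin : ∃ n, ¬N ^ n ∣ c :=
    (FiniteMultiplicity.of_prime_left hirr.prime hred.ne_zero).imp' _ fun _ => id
  obtain ⟨m, hmem, hmax⟩ := Nat.exists_not_and_succ_of_not_zero_of_exists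
    (p := fun n => ¬(N ^ n ∣ c ∧ ((N ^ n : ℝ[X]) : Quat ℝ[X]) ∣ star Q * D ∧
      ((N ^ n : ℝ[X]) : Quat ℝ[X]) ∣ D * star Q)) (by simp) (hfin.imp fun n hn h => hn h.1)
  obtain ⟨hm, hl, hr⟩ := not_not.1 hmem
  by_cases hr' : N ^ (m + 1) ∣ c ∧ ((N ^ (m + 1) : ℝ[X]) : Quat ℝ[X]) ∣ D * star Q
  · refine .inr (splitsOffRight_of_maximal hN hirr hNc hred.star h.star hm ?_ ?_ ?_)
    · rwa [← star_mul, coe_dvd_star]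
    · rwa [← star_mul, coe_dvd_star]
    · rw [← star_mul, coe_dvd_star]
      exact fun h => hmax ⟨h.1, h.2, hr'.2⟩
  · exact .inl (splitsOffRight_of_maximal hN hirr hNc hred h hm hl hr hr')

end Splitting

section Sufficiency

variable {c : ℝ[X]} {Q D P e d : Quat ℝ[X]} {M : DHq[X]}

theorem natDegree_le_of_mul_cstar_eq {f : ℝ[X]} (hM : M.Monic) (hf : f ≠ 0)
    (h : M * cstar M = dPoly f) : M.natDegree ≤ f.natDegree := by
  have hf' : dPoly f ≠ 0 :=
    (Polynomial.map_ne_zero_iff inl_injective).2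
      ((Polynomial.map_ne_zero_iff (algebraMap ℝ Hq).injective).2 hf)
  have hstar : cstar M ≠ 0 := fun h0 => hf' (by rw [← h, h0, mul_zero])
  calc M.natDegree ≤ (M * cstar M).natDegree := by
        rw [hM.natDegree_mul' hstar]
        exact Nat.le_add_right _ _
    _ = (dPoly f).natDegree := by rw [h]
    _ ≤ f.natDegree := natDegree_map_le.trans natDegree_map_le

theorem not_isUnit_normSq (hmonic : (dual P D).Monic) (hmotion : IsMotion (dual P D))
    (hdeg : (dual P D).natDegree ≠ 0) : ¬IsUnit (normSq P) := by
  intro hunit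
  obtain ⟨f, hf, hM⟩ := hmotion
  have hPf : normSq P = f := by
    rw [cstar_dual, dual_mul, dPoly_eq_dual, dual_inj, self_mul_star] at hM
    exact Quaternion.coe_inj.1 hM.1
  exact hdeg (Nat.le_zero.1 ((natDegree_le_of_mul_cstar_eq hmonic hf hM).trans_eq
    (hPf ▸ natDegree_eq_zero_of_isUnit hunit)))

theorem dual_eq_star_mul_star {A B : Quat ℝ[X]}
    (h : dual (star P) (star D) = dual A B * dual e d) :
    dual P D = dual (star e) (star d) * dual (star A) (star B) := by
  rw [dual_mul, dual_inj] at h ⊢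
  obtain ⟨hP, hD⟩ := h
  exact ⟨by rw [← star_star P, hP, star_mul],
    by rw [← star_star D, hD, star_add, star_mul, star_mul, add_comm]⟩

theorem IsLinearFactor.isMotion_left (he : IsLinearFactor e d)
    (h : IsMotion (dual P D * dual e d)) : IsMotion (dual P D) := by
  rw [dual_mul, isMotion_dual_iff, map_mul, re_star_mul_mul_dual, he.re_star_mul, mul_zero,
    zero_add] at h
  exact isMotion_dual_iff.2 ⟨left_ne_zero_of_mul h.1,
    (mul_eq_zero.1 h.2).resolve_left (right_ne_zero_of_mul h.1)⟩

theorem IsLinearFactor.isMotion_right (he : IsLinearFactor e d)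
    (h : IsMotion (dual e d * dual P D)) : IsMotion (dual P D) := by
  rw [dual_mul, isMotion_dual_iff, map_mul, re_star_mul_mul_dual, he.re_star_mul, mul_zero,
    add_zero] at h
  exact isMotion_dual_iff.2 ⟨right_ne_zero_of_mul h.1,
    (mul_eq_zero.1 h.2).resolve_left (left_ne_zero_of_mul h.1)⟩

theorem IsLinearFactor.monic_dual (he : IsLinearFactor e d) :
    (dual e d).Monic := by
  obtain ⟨x, hx⟩ := he.exists_eq_X_sub_C
  exact hx ▸ monic_X_sub_C x

theorem IsLinearFactor.natDegree_dual (he : IsLinearFactor e d) :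
    (dual e d).natDegree = 1 := by
  obtain ⟨x, hx⟩ := he.exists_eq_X_sub_C
  exact hx ▸ natDegree_X_sub_C x

theorem IsLinearFactor.hasLinFact_mul (he : IsLinearFactor e d) (hM : HasLinFact M) :
    HasLinFact (M * dual e d) := by
  obtain ⟨L, hL, rfl⟩ := hM
  obtain ⟨x, hx⟩ := he.exists_eq_X_sub_C
  refine ⟨L ++ [x], ?_, by simp [hx]⟩
  simpa [or_imp, forall_and] using ⟨hL, hx ▸ he.isMotion⟩

theorem IsLinearFactor.hasLinFact_dual_mul (he : IsLinearFactor e d) (hM : HasLinFact M) :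
    HasLinFact (dual e d * M) := by
  obtain ⟨L, hL, rfl⟩ := hM
  obtain ⟨x, hx⟩ := he.exists_eq_X_sub_C
  exact ⟨x :: L, List.forall_mem_cons.2 ⟨hx ▸ he.isMotion, hL⟩, by rw [hx]; rfl⟩

theorem hasLinFact_of_normDivisible (hmonic : (dual (c • Q) D).Monic)
    (hmotion : IsMotion (dual (c • Q) D)) (hred : IsReducedTriple c Q D)
    (h : NormDivisible c Q D) : HasLinFact (dual (c • Q) D) := by
  induction hn : (dual (c • Q) D).natDegree generalizing c Q D with
  | zero => exact ⟨[], by simp, hmonic.natDegree_eq_zero.1 hn⟩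
  | succ n ih =>
    have hunit := not_isUnit_normSq hmonic hmotion (hn ▸ n.succ_ne_zero)
    rcases splitsOffRight_or_star hred h hmotion hunit with hs | hs
    · obtain ⟨c', Q', D', e, d, he, hfac, hred', h'⟩ := hs
      rw [hfac] at hmonic hmotion hn ⊢
      have hmonic' := he.monic_dual.of_mul_monic_right hmonic
      rw [hmonic'.natDegree_mul he.monic_dual, he.natDegree_dual] at hn
      exact he.hasLinFact_mul
        (ih hmonic' (he.isMotion_left hmotion) hred' h' (Nat.succ_injective hn))
    · obtain ⟨c', Q', D', e, d, he, hfac, hred', h'⟩ := hs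
      replace hfac := dual_eq_star_mul_star ((Quaternion.star_smul c Q).symm ▸ hfac)
      rw [Quaternion.star_smul] at hfac
      rw [hfac] at hmonic hmotion hn ⊢
      have hmonic' := he.star.monic_dual.of_mul_monic_left hmonic
      rw [he.star.monic_dual.natDegree_mul hmonic', he.star.natDegree_dual, add_comm] at hn
      exact he.star.hasLinFact_dual_mul
        (ih hmonic' (he.star.isMotion_right hmotion) hred'.star h'.star (Nat.succ_injective hn))

end Sufficiency

section Necessity

variable {c : ℝ[X]} {Q D P D' e d : Quat ℝ[X]}

theorem IsLinearFactor.irreducible_normSq (he : IsLinearFactor e d)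
    (hroot : ∀ a : ℝ, ¬((X - C a : ℝ[X]) : Quat ℝ[X]) ∣ P * e) : Irreducible (normSq e) := by
  refine irreducible_of_degree_le_three_of_not_isRoot ?_ fun a ha =>
    hroot a (coe_dvd_mul_left (coe_X_sub_C_dvd_of_isRoot_normSq ha) P)
  rw [he.natDegree_normSq]
  decide

theorem normDivisible_of_coe_dvd_mul_star (he : IsLinearFactor e d) (hN : Irreducible (normSq e))
    (hred : IsReducedTriple c Q D) (hfac : dual (c • Q) D = dual P D' * dual e d)
    (ih : ∀ c' Q', P = c' • Q' → IsReducedTriple c' Q' D' → NormDivisible c' Q' D')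
    (hQe : ((normSq e : ℝ[X]) : Quat ℝ[X]) ∣ Q * star e) : NormDivisible c Q D := by
  rw [dual_mul, dual_inj] at hfac
  obtain ⟨hP, rfl⟩ := hfac
  obtain ⟨Q, rfl⟩ := (coe_normSq_dvd_mul_star_iff hN.ne_zero).1 hQe
  obtain rfl : P = c • Q :=
    mul_right_cancel_of_normSq_ne_zero hN.ne_zero (by rw [← hP, smul_mul_assoc])
  rw [smul_mul_assoc, add_comm] at hred ⊢
  exact (ih c Q rfl hred.of_mul_right).mul_right hred.ne_zero hN.prime (not_dvd_two hN)
    (hred.not_coe_dvd_primal _ hN.prime) he.star_right he.mul_eq_mul_star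

theorem normDivisible_of_not_coe_dvd_mul_star (he : IsLinearFactor e d)
    (hN : Irreducible (normSq e)) (hred : IsReducedTriple c Q D)
    (hfac : dual (c • Q) D = dual P D' * dual e d)
    (ih : ∀ c' Q', P = c' • Q' → IsReducedTriple c' Q' D' → NormDivisible c' Q' D')
    (hQe : ¬((normSq e : ℝ[X]) : Quat ℝ[X]) ∣ Q * star e) : NormDivisible c Q D := by
  rw [dual_mul, dual_inj] at hfac
  obtain ⟨hP, rfl⟩ := hfac
  have hPe : c • (Q * star e) = normSq e • P := by
    rw [← smul_mul_assoc, hP, mul_mul_star_self]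
  obtain ⟨c, rfl⟩ : normSq e ∣ c := by
    simpa using coe_pow_dvd_of_coe_pow_dvd_smul hN.prime hQe (n := 1)
      (by simpa [hPe] using coe_dvd_smul dvd_rfl P)
  obtain rfl : c • (Q * star e) = P := smul_left_cancel hN.ne_zero (by rw [← hPe, smul_smul])
  have hD : (c • (Q * star e)) * d + D' * e = (D' + c • (Q * d)) * e := by
    rw [smul_mul_assoc, mul_assoc, he.star_mul_eq, ← mul_assoc, add_mul, smul_mul_assoc, add_comm]
  rw [hD] at hred ⊢
  refine (normDivisible_mul_star_iff hN.prime he.star_right fun h => ?_).2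
    (ih _ _ rfl (hred.mul_star hN.prime hQe))
  rcases coe_dvd_mul_or_of_dvd_normSq hN.prime (not_dvd_two hN) dvd_rfl h with h | h
  · exact hred.not_coe_dvd_dual _ hN.prime (dvd_mul_right _ _) h
  · rw [← coe_dvd_star, star_mul, star_star] at h
    exact hQe h

theorem normDivisible_of_hasLinFact (hbdd : ∀ a : ℝ, ¬((X - C a : ℝ[X]) : Quat ℝ[X]) ∣ c • Q)
    (hred : IsReducedTriple c Q D) (hfac : HasLinFact (dual (c • Q) D)) :
    NormDivisible c Q D := by
  obtain ⟨L, hL, hfac⟩ := hfac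
  induction L using List.reverseRecOn generalizing c Q D with
  | nil =>
    rw [List.map_nil, List.prod_nil, one_eq_dual, dual_inj] at hfac
    intro f _ _ _
    rw [hfac.2, map_zero]
    exact dvd_zero _
  | append_singleton L x ih =>
    obtain ⟨P, D', hPD⟩ := exists_prod_X_sub_C_eq_dual L
    have he := isLinearFactor_of_isMotion (hL x (by simp))
    rw [List.map_append, List.prod_append, hPD, List.map_singleton, List.prod_singleton,
      X_sub_C_eq_dual] at hfac
    have hP : c • Q = P * linear x.fst := (dual_inj.1 (hfac.trans (dual_mul _ _ _ _))).1
    rw [hP] at hbdd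
    have hN := he.irreducible_normSq hbdd
    have ih (c' Q') (hP' : P = c' • Q') (hred' : IsReducedTriple c' Q' D') :
        NormDivisible c' Q' D' :=
      ih (fun a ha => hbdd a (hP' ▸ ha.mul_right _)) hred'
        (fun y hy => hL y (List.mem_append_left _ hy)) (hP' ▸ hPD.symm)
    by_cases hQe : ((normSq (linear x.fst) : ℝ[X]) : Quat ℝ[X]) ∣ Q * star (linear x.fst)
    · exact normDivisible_of_coe_dvd_mul_star he hN hred hfac ih hQe
    · exact normDivisible_of_not_coe_dvd_mul_star he hN hred hfac ih hQe

end Necessity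

section Reformulation

variable {c g : ℝ[X]} {Q D : Hq[X]}

theorem normDivisible_components_iff (hc : c ≠ 0) (hg : IsMrpf3 g c (cstar Q * D) (D * cstar Q)) :
    NormDivisible c (components Q) (components D) ↔ RDvdQ (c * g) (D * cstar D) := by
  obtain ⟨-, hgc, hgl, hgr, hmax⟩ := hg
  simp only [rDvdQ_iff, map_mul components, components_cstar] at hgl hgr hmax ⊢
  rw [self_mul_star, coe_dvd_coe]
  refine ⟨fun h => h g hgc hgl hgr, fun h f hfc hfl hfr => (mul_dvd_mul_left c ?_).trans h⟩
  have hassoc := normalize_associated f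
  exact hassoc.symm.dvd.trans (hmax _ (monic_normalize (ne_zero_of_dvd_ne_zero hc hfc))
    (hassoc.dvd.trans hfc) ((coe_dvd_coe.2 hassoc.dvd).trans hfl)
    ((coe_dvd_coe.2 hassoc.dvd).trans hfr))

theorem not_coe_dvd_components (hQ : ReducedQ Q) {p : ℝ[X]} (hp : Prime p) :
    ¬(p : Quat ℝ[X]) ∣ components Q := by
  intro h
  refine hp.not_isUnit (normalize_eq_one.1 (hQ _ (monic_normalize hp.ne_zero) ?_))
  rw [rDvdQ_iff]
  exact (coe_dvd_coe.2 (normalize_associated p).dvd).trans h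

theorem eq_one_of_reducedD {f : ℝ[X]} {P D : Quat ℝ[X]} (hM : ReducedD (dual P D))
    (hf : f.Monic) (hP : (f : Quat ℝ[X]) ∣ P) (hD : (f : Quat ℝ[X]) ∣ D) : f = 1 := by
  obtain ⟨P, rfl⟩ := hP
  obtain ⟨D, rfl⟩ := hD
  refine hM f hf ⟨dual P D, ?_⟩
  rw [dPoly_eq_dual, dual_mul, zero_mul, add_zero]

theorem isReducedTriple_components (hM : IsMotion (mp (qPoly c * Q) D))
    (hred : ReducedD (mp (qPoly c * Q) D)) (hQ : ReducedQ Q) :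
    IsReducedTriple c (components Q) (components D) := by
  rw [mp_eq_dual, map_mul, components_qPoly, coe_mul_eq_smul] at hM hred
  refine ⟨?_, fun p => not_coe_dvd_components hQ, fun p hp hpc hpD => ?_⟩
  · rintro rfl
    exact (isMotion_dual_iff.1 hM).1 (by rw [zero_smul, map_zero])
  · have hassoc := normalize_associated p
    exact hp.not_isUnit (normalize_eq_one.1 (eq_one_of_reducedD hred (monic_normalize hp.ne_zero)
      (coe_dvd_smul (hassoc.dvd.trans hpc) _) ((coe_dvd_coe.2 hassoc.dvd).trans hpD)))

end Reformulation

end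

end MotionPolynomial

/-- Theorem 1: A bounded monic reduced motion polynomial `M = cQ + εD` with `Q` reduced
admits a factorization into monic linear motion polynomial factors iff `c·g` divides `D·D*`,
where `g = mrpf(c, Q*D, DQ*)`. -/
theorem bounded_motion_polynomial_linear_factorization_iff
    (c : ℝ[X]) (Q D : Hq[X]) (g : ℝ[X]) (M : DHq[X])
    (hM : M = mp (qPoly c * Q) D)
    (hmonic : M.Monic) (hmotion : IsMotion M)
    (hMred : ReducedD M) (hQred : ReducedQ Q)
    (hbdd : BoundedD M)
    (hg : IsMrpf3 g c (cstar Q * D) (D * cstar Q)) :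
    HasLinFact M ↔ RDvdQ (c * g) (D * cstar D) := by
  open MotionPolynomial Quaternion in
  subst hM
  have hred : IsReducedTriple c (components Q) (components D) :=
    isReducedTriple_components hmotion hMred hQred
  rw [← normDivisible_components_iff hred.ne_zero hg]
  simp only [BoundedD, primal_mp, rDvdQ_iff, map_mul, components_qPoly, coe_mul_eq_smul] at hbdd
  rw [mp_eq_dual, map_mul, components_qPoly, coe_mul_eq_smul] at hmonic hmotion ⊢
  exact ⟨normDivisible_of_hasLinFact hbdd hred, hasLinFact_of_normDivisible hmonic hmotion hred⟩
end

section
/- Let M = cQ + εD ∈ 𝔻ℍ[t] be a bounded monic reduced motion polynomial of degree n with monic c ∈ ℝ[t], Q, D ∈ ℍ[t], mrpf(Q) = 1, and ν(M) = c²·ν(Q) = Nⁿ for some irreducible quadratic N ∈ ℝ[t]. Define g_L := mrpf(c, Q*·D) and g_R := mrpf(c, D·Q*). If M admits a factorization into monic linear motion polynomial factors, then c·g_L divides D·D* or c·g_R divides D·D* in ℝ[t]. -/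
open Polynomial DualNumber TrivSqZeroExt

/-!
Making `N` monic, every linear factor of `M` has norm polynomial `N`. Multiplying the factors one at
a time shows that `N` divides `M` or `M = M₁ (N ^ m + ε b) M₂`, where `N` does not divide the primal
part `Q₁ Q₂` of `M₁ M₂`, `b* = -b` and `N ^ m ∣ b b*`: since `N` generates a prime ideal of `ℍ[t]`,
`N` divides the primal part after a further multiplication only if two neighbouring linear factors
have conjugate primal parts, and enclosing `N ^ m + ε b` between such a pair raises `m` by one.

Let `ν(M₁) = N ^ j`, `ν(M₂) = N ^ k` and `s ≤ 2 m`. Then `N ^ s` divides `D D*` as soon as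
`s ≤ m + j` and `s ≤ m + k`. If `N ^ s` divides `P* D`, where `P = N ^ m Q₁ Q₂` is the primal part,
then `s ≤ m + j`: otherwise `N` divides `Q₂* b Q₂`, hence `b Q₂`, hence `D` and so `M`, which is
reduced. Symmetrically, `N ^ s ∣ D P*` forces `s ≤ m + k`. So the left alternative holds if `j ≤ k`
and the right one if `k ≤ j`.
-/

section MapCoeff

variable {R S : Type*} [Semiring R] [Semiring S]

/-- The additive map `R[t] → S[t]` applying `φ` to every coefficient. -/
noncomputable def mapCoeff (φ : R →+ S) : R[X] →+ S[X] where
  toFun A := A.sum fun n a => monomial n (φ a)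
  map_zero' := sum_zero_index _
  map_add' A B := sum_add_index A B _ (by simp) (by simp)

@[simp]
lemma coeff_mapCoeff (φ : R →+ S) (A : R[X]) (n : ℕ) :
    (mapCoeff φ A).coeff n = φ (A.coeff n) := by
  simp +contextual [mapCoeff, sum_def, coeff_monomial, Finset.sum_ite_eq']

end MapCoeff

section Cstar

variable {R : Type*} [Semiring R] [StarRing R]

lemma cstar_eq_mapCoeff (A : R[X]) :
    cstar A = mapCoeff (starAddEquiv : R ≃+ R).toAddMonoidHom A := by
  simp [cstar, mapCoeff, C_mul_X_pow_eq_monomial]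

@[simp]
lemma coeff_cstar (A : R[X]) (n : ℕ) : (cstar A).coeff n = star (A.coeff n) := by
  simp [cstar_eq_mapCoeff]

@[simp]
lemma cstar_zero : cstar (0 : R[X]) = 0 := by
  simp [cstar_eq_mapCoeff]

@[simp]
lemma cstar_add (A B : R[X]) : cstar (A + B) = cstar A + cstar B := by
  simp [cstar_eq_mapCoeff]

@[simp]
lemma cstar_cstar (A : R[X]) : cstar (cstar A) = A := by
  ext1 n; simp

@[simp]
lemma cstar_C (a : R) : cstar (C a) = C (star a) := by
  ext1 n; simp [coeff_C, apply_ite star]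

@[simp]
lemma cstar_one : cstar (1 : R[X]) = 1 := by
  rw [← C_1, cstar_C, star_one]

@[simp]
lemma cstar_X : cstar (X : R[X]) = X := by
  ext1 n; simp [coeff_X, apply_ite star]

@[simp]
lemma cstar_mul (A B : R[X]) : cstar (A * B) = cstar B * cstar A := by
  ext1 n
  rw [coeff_cstar, coeff_mul, coeff_mul, ← Finset.Nat.sum_antidiagonal_swap]
  simp [star_sum]

lemma mul_mul_cstar_mul_of_commute {A B : R[X]} (h : Commute A (B * cstar B)) :
    A * B * cstar (A * B) = B * cstar B * (A * cstar A) := by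
  rw [cstar_mul, ← mul_assoc, mul_assoc A, h.eq, mul_assoc]

end Cstar

section CstarRing

variable {R : Type*} [Ring R] [StarRing R]

@[simp]
lemma cstar_neg (A : R[X]) : cstar (-A) = -cstar A := by
  simp [cstar_eq_mapCoeff]

lemma cstar_sub (A B : R[X]) : cstar (A - B) = cstar A - cstar B := by
  simp [cstar_eq_mapCoeff]

end CstarRing

section RealPolynomials

variable {f g : ℝ[X]} {A B : Hq[X]}

lemma qPoly_one : qPoly 1 = 1 := Polynomial.map_one _

lemma qPoly_add (f g : ℝ[X]) : qPoly (f + g) = qPoly f + qPoly g := Polynomial.map_add _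

lemma qPoly_mul (f g : ℝ[X]) : qPoly (f * g) = qPoly f * qPoly g := Polynomial.map_mul _

lemma qPoly_injective : Function.Injective qPoly :=
  map_injective _ (algebraMap ℝ Hq).injective

lemma qPoly_ne_zero (hf : f ≠ 0) : qPoly f ≠ 0 :=
  (Polynomial.map_ne_zero_iff (algebraMap ℝ Hq).injective).2 hf

lemma natDegree_qPoly (f : ℝ[X]) : (qPoly f).natDegree = f.natDegree :=
  natDegree_map_eq_of_injective (algebraMap ℝ Hq).injective f

@[simp]
lemma coeff_qPoly (f : ℝ[X]) (n : ℕ) : (qPoly f).coeff n = (f.coeff n : Hq) :=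
  coeff_map _ _

lemma qPoly_commute (f : ℝ[X]) (A : Hq[X]) : Commute (qPoly f) A :=
  letI := Polynomial.algebra ℝ Hq
  Algebra.commutes f A

@[simp]
lemma cstar_qPoly (f : ℝ[X]) : cstar (qPoly f) = qPoly f := by
  ext1 n; simp

lemma cstar_qPoly_mul (f : ℝ[X]) (A : Hq[X]) : cstar (qPoly f * A) = qPoly f * cstar A := by
  rw [cstar_mul, cstar_qPoly, (qPoly_commute f _).eq]

lemma qPoly_dvd_qPoly (h : f ∣ g) : qPoly f ∣ qPoly g :=
  _root_.map_dvd (mapRingHom (algebraMap ℝ Hq)) h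

lemma qPoly_dvd_mul_of_dvd_right (h : qPoly f ∣ B) (A : Hq[X]) : qPoly f ∣ A * B := by
  obtain ⟨B, rfl⟩ := h
  exact ⟨A * B, (qPoly_commute f A).symm.left_comm B⟩

lemma qPoly_dvd_qPoly_mul (h : f ∣ g) (A : Hq[X]) : qPoly f ∣ qPoly g * A :=
  (qPoly_dvd_qPoly h).mul_right A

lemma qPoly_dvd_cstar (h : qPoly f ∣ A) : qPoly f ∣ cstar A := by
  obtain ⟨A, rfl⟩ := h
  exact ⟨cstar A, cstar_qPoly_mul f A⟩

lemma qPoly_mul_dvd_qPoly_mul (f : ℝ[X]) (h : qPoly g ∣ A) : qPoly (f * g) ∣ qPoly f * A := by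
  rw [qPoly_mul]
  exact mul_dvd_mul_left _ h

lemma qPoly_dvd_of_mul_dvd_mul (hf : f ≠ 0) (h : qPoly (f * g) ∣ qPoly f * A) : qPoly g ∣ A := by
  rw [qPoly_mul] at h
  exact (mul_dvd_mul_iff_left (qPoly_ne_zero hf)).1 h

lemma qPoly_dvd_of_isCoprime_of_dvd_mul (hfg : IsCoprime f g) (h : qPoly f ∣ qPoly g * A) :
    qPoly f ∣ A := by
  obtain ⟨a, b, hab⟩ := hfg
  have hA : A = qPoly f * (qPoly a * A) + qPoly b * (qPoly g * A) := by
    rw [← mul_assoc, ← mul_assoc, ← qPoly_mul, ← qPoly_mul, ← add_mul, ← qPoly_add, mul_comm f,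
      hab, qPoly_one, one_mul]
  rw [hA]
  exact (dvd_mul_right _ _).add (qPoly_dvd_mul_of_dvd_right h _)

end RealPolynomials

section RealPart

/-- The real part of a quaternion polynomial, so that `A + A* = 2 · rePoly A`. -/
noncomputable def rePoly : Hq[X] →+ ℝ[X] :=
  mapCoeff (QuaternionAlgebra.reₗ (R := ℝ) (-1) 0 (-1)).toAddMonoidHom

@[simp]
lemma coeff_rePoly (A : Hq[X]) (n : ℕ) : (rePoly A).coeff n = (A.coeff n).re :=
  coeff_mapCoeff _ A n

lemma re_sum {ι : Type*} (s : Finset ι) (q : ι → Hq) : (∑ i ∈ s, q i).re = ∑ i ∈ s, (q i).re :=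
  map_sum (QuaternionAlgebra.reₗ (R := ℝ) (-1) 0 (-1)) q s

lemma rePoly_qPoly (f : ℝ[X]) : rePoly (qPoly f) = f := by
  ext1 n; simp

lemma rePoly_mul_comm (A B : Hq[X]) : rePoly (A * B) = rePoly (B * A) := by
  ext1 n
  rw [coeff_rePoly, coeff_rePoly, coeff_mul, coeff_mul, ← Finset.Nat.sum_antidiagonal_swap,
    re_sum, re_sum]
  refine Finset.sum_congr rfl fun x _ => ?_
  simp only [Prod.fst_swap, Prod.snd_swap, Quaternion.re_mul]
  ring

lemma rePoly_qPoly_mul (f : ℝ[X]) (A : Hq[X]) : rePoly (qPoly f * A) = f * rePoly A := by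
  ext1 n
  simp [coeff_mul, re_sum]

lemma dvd_rePoly {f : ℝ[X]} {A : Hq[X]} (h : qPoly f ∣ A) : f ∣ rePoly A := by
  obtain ⟨A, rfl⟩ := h
  exact ⟨rePoly A, rePoly_qPoly_mul f A⟩

lemma dvd_of_qPoly_dvd_qPoly {f g : ℝ[X]} (h : qPoly f ∣ qPoly g) : f ∣ g :=
  rePoly_qPoly g ▸ dvd_rePoly h

lemma eq_qPoly_rePoly_of_cstar_eq_self {A : Hq[X]} (h : cstar A = A) : A = qPoly (rePoly A) := by
  ext1 n
  rw [coeff_qPoly, coeff_rePoly, ← Quaternion.star_eq_self, ← coeff_cstar, h]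

lemma add_cstar_self (A : Hq[X]) : A + cstar A = qPoly (2 * rePoly A) := by
  rw [two_mul, qPoly_add]
  ext1 n
  simp [Quaternion.self_add_star, two_mul]

lemma mul_cstar_self (A : Hq[X]) : A * cstar A = qPoly (rePoly (A * cstar A)) :=
  eq_qPoly_rePoly_of_cstar_eq_self (by simp)

lemma commute_mul_cstar_self (A B : Hq[X]) : Commute A (B * cstar B) := by
  rw [mul_cstar_self]
  exact (qPoly_commute _ A).symm

lemma mul_mul_cstar_mul (A B : Hq[X]) :
    A * B * cstar (A * B) = B * cstar B * (A * cstar A) :=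
  mul_mul_cstar_mul_of_commute (commute_mul_cstar_self A B)

lemma cstar_mul_self (A : Hq[X]) : cstar A * A = A * cstar A := by
  rcases eq_or_ne A 0 with rfl | hA
  · simp
  · refine mul_left_cancel₀ hA ?_
    rw [← mul_assoc, (commute_mul_cstar_self A A).eq]

lemma qPoly_dvd_add_mul_cstar_add {f : ℝ[X]} {A B : Hq[X]} (hA : qPoly f ∣ A * cstar A)
    (hAB : qPoly f ∣ A * cstar B) (hB : qPoly f ∣ B * cstar B) :
    qPoly f ∣ (A + B) * cstar (A + B) := by
  have hBA : qPoly f ∣ B * cstar A := by simpa using qPoly_dvd_cstar hAB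
  rw [cstar_add, add_mul, mul_add, mul_add]
  exact (hA.add hAB).add (hBA.add hB)

lemma qPoly_dvd_add_qPoly_mul_mul_cstar {f : ℝ[X]} {A : Hq[X]} (hA : qPoly f ∣ A * cstar A)
    (B Z : Hq[X]) : qPoly f ∣ (A * B + qPoly f * Z) * cstar (A * B + qPoly f * Z) := by
  refine qPoly_dvd_add_mul_cstar_add ?_ ?_ ((dvd_mul_right _ Z).mul_right _)
  · rw [mul_mul_cstar_mul]
    exact qPoly_dvd_mul_of_dvd_right hA _
  · exact qPoly_dvd_mul_of_dvd_right (qPoly_dvd_cstar (dvd_mul_right _ Z)) _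

end RealPart

section Primeness

/-- The orthonormal basis `1, i, j, k` of the real quaternions. -/
@[simps]
def quatUnit (s : Fin 4) : Hq :=
  ⟨![1, 0, 0, 0] s, ![0, 1, 0, 0] s, ![0, 0, 1, 0] s, ![0, 0, 0, 1] s⟩

lemma sum_quatUnit_mul_mul_star (q : Hq) :
    ∑ s, quatUnit s * q * star (quatUnit s) = ((4 * q.re : ℝ) : Hq) := by
  ext <;> simp [Fin.sum_univ_four]; ring

lemma sum_re_star_quatUnit_mul (q : Hq) :
    ∑ s, ((star (quatUnit s) * q).re : Hq) * quatUnit s = q := by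
  ext <;> simp [Fin.sum_univ_four]

lemma sum_C_quatUnit_mul_mul_star (A : Hq[X]) :
    ∑ s, C (quatUnit s) * A * C (star (quatUnit s)) = qPoly (C 4 * rePoly A) := by
  ext1 n
  simp only [finsetSum_coeff, coeff_mul_C, coeff_C_mul, coeff_qPoly, coeff_rePoly]
  exact sum_quatUnit_mul_mul_star _

lemma sum_qPoly_rePoly_mul_C_quatUnit (A : Hq[X]) :
    ∑ s, qPoly (rePoly (C (star (quatUnit s)) * A)) * C (quatUnit s) = A := by
  ext1 n
  simp only [finsetSum_coeff, coeff_mul_C, coeff_C_mul, coeff_qPoly, coeff_rePoly]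
  exact sum_re_star_quatUnit_mul _

variable {N : ℝ[X]} {A B : Hq[X]}

lemma qPoly_dvd_rePoly_mul (h : ∀ U, qPoly N ∣ A * U * B) : qPoly N ∣ qPoly (rePoly A) * B := by
  have h4 : qPoly N ∣ qPoly (C 4 * rePoly A) * B := by
    rw [← sum_C_quatUnit_mul_mul_star, Finset.sum_mul]
    refine Finset.dvd_sum fun s _ => ?_
    simpa only [mul_assoc] using qPoly_dvd_mul_of_dvd_right (h (C (star (quatUnit s)))) _
  have hC : qPoly (rePoly A) = qPoly (C 4⁻¹) * qPoly (C 4 * rePoly A) := by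
    rw [← qPoly_mul, ← mul_assoc, ← C_mul, inv_mul_cancel₀ four_ne_zero, C_1, one_mul]
  rw [hC, mul_assoc]
  exact qPoly_dvd_mul_of_dvd_right h4 _

/-- In ring-theoretic terms, `N` generates a prime ideal of `ℍ[t]`. -/
lemma qPoly_dvd_or_dvd_of_forall_dvd_mul_mul (hN : Irreducible N)
    (h : ∀ U, qPoly N ∣ A * U * B) : qPoly N ∣ A ∨ qPoly N ∣ B := by
  by_contra! hAB
  have hre (s : Fin 4) : N ∣ rePoly (C (star (quatUnit s)) * A) := by
    by_contra hs
    refine hAB.2 (qPoly_dvd_of_isCoprime_of_dvd_mul ((hN.coprime_iff_not_dvd).2 hs) ?_)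
    refine qPoly_dvd_rePoly_mul fun U => ?_
    simpa only [mul_assoc] using qPoly_dvd_mul_of_dvd_right (h U) _
  refine hAB.1 ?_
  rw [← sum_qPoly_rePoly_mul_C_quatUnit A]
  exact Finset.dvd_sum fun s _ => qPoly_dvd_qPoly_mul (hre s) _

lemma qPoly_dvd_mul_or_dvd_mul_of_dvd_mul_mul (hN : Irreducible N) {Z : Hq[X]}
    (hZ : qPoly N ∣ Z * cstar Z) (h : qPoly N ∣ A * Z * B) :
    qPoly N ∣ A * Z ∨ qPoly N ∣ Z * B := by
  refine (qPoly_dvd_or_dvd_of_forall_dvd_mul_mul hN fun U => ?_).symm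
  have hre : N ∣ rePoly (B * U * A * Z) := by
    rw [mul_assoc, rePoly_mul_comm, ← mul_assoc]
    exact dvd_rePoly (h.mul_right U)
  have key : Z * B * U * (A * Z) =
      qPoly (2 * rePoly (B * U * A * Z)) * Z - Z * cstar Z * cstar (B * U * A) := by
    rw [eq_sub_iff_add_eq, (qPoly_commute _ Z).eq, ← add_cstar_self, cstar_mul (B * U * A) Z]
    simp only [mul_add, mul_assoc]
  rw [key]
  exact (qPoly_dvd_qPoly_mul (hre.mul_left 2) Z).sub (hZ.mul_right _)

end Primeness

section DualPart

lemma fst_star (x : DHq) : (star x).fst = star x.fst := add_zero _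

lemma snd_star (x : DHq) : (star x).snd = star x.snd := zero_add _

noncomputable instance : StarRing DHq where
  star_involutive x := TrivSqZeroExt.ext (by simp [fst_star]) (by simp [snd_star])
  star_mul x y := TrivSqZeroExt.ext (by simp [fst_star]) (by simp [fst_star, snd_star, add_comm])
  star_add x y := TrivSqZeroExt.ext (by simp [fst_star]) (by simp [snd_star])

/-- The dual part `D` of `P + ε D`. -/
noncomputable def dual : DHq[X] →+ Hq[X] := mapCoeff (sndHom Hq Hq).toAddMonoidHom

variable {A B : DHq[X]} {f g : ℝ[X]}

@[simp]
lemma coeff_primal (A : DHq[X]) (n : ℕ) : (primal A).coeff n = (A.coeff n).fst :=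
  coeff_map _ _

@[simp]
lemma coeff_dual (A : DHq[X]) (n : ℕ) : (dual A).coeff n = (A.coeff n).snd :=
  coeff_mapCoeff _ A n

lemma ext_primal_dual (hp : primal A = primal B) (hd : dual A = dual B) : A = B := by
  ext n : 2
  · rw [← coeff_primal, hp, coeff_primal]
  · rw [← coeff_dual, hd, coeff_dual]

@[simp]
lemma primal_add (A B : DHq[X]) : primal (A + B) = primal A + primal B :=
  Polynomial.map_add _

@[simp]
lemma primal_mul (A B : DHq[X]) : primal (A * B) = primal A * primal B :=
  Polynomial.map_mul _

@[simp]
lemma dual_mul (A B : DHq[X]) : dual (A * B) = primal A * dual B + dual A * primal B := by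
  ext1 n
  simp [coeff_mul, Finset.sum_add_distrib, snd_sum]

@[simp]
lemma primal_cstar (A : DHq[X]) : primal (cstar A) = cstar (primal A) := by
  ext1 n
  simp [fst_star]

@[simp]
lemma dual_cstar (A : DHq[X]) : dual (cstar A) = cstar (dual A) := by
  ext1 n
  simp [snd_star]

@[simp]
lemma primal_C (x : DHq) : primal (C x) = C x.fst := Polynomial.map_C _

@[simp]
lemma dual_C (x : DHq) : dual (C x) = C x.snd := by
  ext1 n
  rw [coeff_dual, coeff_C, coeff_C]
  split_ifs <;> simp

@[simp]
lemma primal_one : primal 1 = 1 := Polynomial.map_one _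

@[simp]
lemma dual_one : dual 1 = 0 := by
  rw [← C_1, dual_C, snd_one, C_0]

@[simp]
lemma primal_dhQ (P : Hq[X]) : primal (dhQ P) = P := by
  ext1 n
  simp [dhQ]

@[simp]
lemma dual_dhQ (P : Hq[X]) : dual (dhQ P) = 0 := by
  ext1 n
  simp [dhQ]

@[simp]
lemma primal_mp (P D : Hq[X]) : primal (mp P D) = P := by
  simp [mp]

@[simp]
lemma dual_mp (P D : Hq[X]) : dual (mp P D) = D := by
  simp [mp]

@[simp]
lemma primal_dPoly (f : ℝ[X]) : primal (dPoly f) = qPoly f :=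
  primal_dhQ _

@[simp]
lemma dual_dPoly (f : ℝ[X]) : dual (dPoly f) = 0 :=
  dual_dhQ _

lemma primal_X_sub_C (h : DHq) : primal (X - C h) = X - C h.fst := by
  rw [primal, Polynomial.map_sub, map_X, ← primal, primal_C]

lemma dPoly_one : dPoly 1 = 1 :=
  ext_primal_dual (by simp [qPoly_one]) (by simp)

lemma dPoly_mul (f g : ℝ[X]) : dPoly (f * g) = dPoly f * dPoly g :=
  ext_primal_dual (by simp [qPoly_mul]) (by simp)

lemma dPoly_commute (f : ℝ[X]) (A : DHq[X]) : Commute (dPoly f) A :=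
  ext_primal_dual (by simp [(qPoly_commute f _).eq]) (by simp [(qPoly_commute f _).eq])

lemma dPoly_dvd_iff : dPoly f ∣ A ↔ qPoly f ∣ primal A ∧ qPoly f ∣ dual A := by
  constructor
  · rintro ⟨B, rfl⟩
    simp
  · rintro ⟨⟨P, hP⟩, ⟨D, hD⟩⟩
    exact ⟨mp P D, ext_primal_dual (by simp [hP]) (by simp [hD])⟩

lemma dPoly_dvd_mul_of_qPoly_dvd_primal (hA : qPoly f ∣ primal A) (hB : qPoly f ∣ primal B) :
    dPoly f ∣ A * B := by
  refine dPoly_dvd_iff.2 ⟨?_, ?_⟩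
  · rw [primal_mul]
    exact hA.mul_right _
  · rw [dual_mul]
    exact (hA.mul_right _).add (qPoly_dvd_mul_of_dvd_right hB _)

lemma mul_mul_cstar_mul_eq_dPoly (hA : A * cstar A = dPoly f) (hB : B * cstar B = dPoly g) :
    A * B * cstar (A * B) = dPoly (f * g) := by
  rw [mul_mul_cstar_mul_of_commute (hB ▸ (dPoly_commute g A).symm), hA, hB, mul_comm f, dPoly_mul]

lemma primal_mul_cstar_primal (h : A * cstar A = dPoly f) :
    primal A * cstar (primal A) = qPoly f := by
  simpa using congrArg primal h

lemma dual_mul_cstar_primal (h : A * cstar A = dPoly f) :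
    dual A * cstar (primal A) = -(primal A * cstar (dual A)) := by
  rw [eq_neg_iff_add_eq_zero, add_comm]
  simpa using congrArg dual h

end DualPart

section LinearProducts

/-- The motion polynomials `t - h` whose norm polynomial is `N`. -/
def linearFactors (N : ℝ[X]) : Set DHq[X] :=
  {L | (∃ h : DHq, L = X - C h) ∧ L * cstar L = dPoly N}

/-- The products of motion polynomials `t - h` whose norm polynomial is `N`. -/
noncomputable def linearProducts (N : ℝ[X]) : Submonoid DHq[X] :=
  Submonoid.closure (linearFactors N)

variable {N : ℝ[X]} {L L₁ L₂ M : DHq[X]}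

lemma exists_primal_eq_of_mem_linearFactors (hL : L ∈ linearFactors N) :
    ∃ p : Hq, primal L = X - C p := by
  obtain ⟨⟨h, rfl⟩, -⟩ := hL
  exact ⟨h.fst, primal_X_sub_C h⟩

lemma not_qPoly_dvd_primal_of_mem_linearFactors (hN : N.natDegree = 2)
    (hL : L ∈ linearFactors N) : ¬ qPoly N ∣ primal L := by
  obtain ⟨p, hp⟩ := exists_primal_eq_of_mem_linearFactors hL
  intro h
  refine X_sub_C_ne_zero p (hp ▸ eq_zero_of_dvd_of_natDegree_lt h ?_)
  rw [hp, natDegree_X_sub_C, natDegree_qPoly, hN]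
  exact one_lt_two

lemma primal_eq_cstar_primal_of_qPoly_dvd_mul (hN : N.natDegree = 2)
    (hL₁ : L₁ ∈ linearFactors N) (hL₂ : L₂ ∈ linearFactors N)
    (h : qPoly N ∣ primal L₁ * primal L₂) : primal L₁ = cstar (primal L₂) := by
  obtain ⟨p, hp⟩ := exists_primal_eq_of_mem_linearFactors hL₁
  obtain ⟨q, hq⟩ := exists_primal_eq_of_mem_linearFactors hL₂
  have hnorm : cstar (primal L₂) * primal L₂ = qPoly N :=
    (cstar_mul_self _).trans (primal_mul_cstar_primal hL₂.2)
  have hsub : primal L₁ - cstar (primal L₂) = C (star q - p) := by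
    rw [hp, hq, cstar_sub, cstar_X, cstar_C, C_sub]
    abel
  have hdvd : qPoly N ∣ C (star q - p) * primal L₂ := by
    rw [← hsub, sub_mul, hnorm]
    exact h.sub dvd_rfl
  have hzero : C (star q - p) * primal L₂ = 0 := by
    refine eq_zero_of_dvd_of_natDegree_lt hdvd ?_
    rw [natDegree_qPoly, hN, hq]
    exact (natDegree_C_mul_le _ _).trans_lt (by simp)
  rw [← sub_eq_zero, hsub]
  exact (mul_eq_zero.1 hzero).resolve_right (hq ▸ X_sub_C_ne_zero q)

lemma mul_mem_linearProducts (hM : M ∈ linearProducts N) (hL : L ∈ linearFactors N) :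
    M * L ∈ linearProducts N :=
  mul_mem hM (Submonoid.subset_closure hL)

lemma exists_mul_cstar_eq_of_mem_linearProducts (hM : M ∈ linearProducts N) :
    ∃ j, M * cstar M = dPoly (N ^ j) := by
  induction hM using Submonoid.closure_induction with
  | mem L hL => exact ⟨1, by rw [hL.2, pow_one]⟩
  | one => exact ⟨0, by simp [dPoly_one]⟩
  | mul A B _ _ hA hB =>
    obtain ⟨j, hj⟩ := hA
    obtain ⟨k, hk⟩ := hB
    exact ⟨j + k, by rw [mul_mul_cstar_mul_eq_dPoly hj hk, pow_add]⟩

lemma eq_one_or_exists_mul_of_mem_linearProducts (hM : M ∈ linearProducts N) :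
    M = 1 ∨ ∃ W ∈ linearProducts N, ∃ L ∈ linearFactors N, M = W * L := by
  induction hM using Submonoid.closure_induction_right with
  | one => exact .inl rfl
  | mul_right W hW L hL _ => exact .inr ⟨W, hW, L, hL, rfl⟩

end LinearProducts

section Core

/-- The dual quaternion polynomials `N ^ m + ε b` with `b* = -b` and `N ^ m ∣ b b*`. These arise
when linear factors with conjugate primal parts meet in a product. -/
structure IsCore (N : ℝ[X]) (m : ℕ) (S : DHq[X]) : Prop where
  primal_eq : primal S = qPoly (N ^ m)
  cstar_dual : cstar (dual S) = -dual S
  dvd_dual_mul_cstar : qPoly (N ^ m) ∣ dual S * cstar (dual S)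

variable {N : ℝ[X]} {m : ℕ} {S L₁ L₂ : DHq[X]}

lemma isCore_one (N : ℝ[X]) : IsCore N 0 1 where
  primal_eq := by simp [qPoly_one]
  cstar_dual := by simp
  dvd_dual_mul_cstar := by simp

lemma cstar_dual_eq_neg_of_primal_eq_qPoly {A : DHq[X]} {f g : ℝ[X]} (hf : f ≠ 0)
    (hA : primal A = qPoly f) (h : A * cstar A = dPoly g) : cstar (dual A) = -dual A := by
  refine mul_left_cancel₀ (qPoly_ne_zero hf) ?_
  have hdual := dual_mul_cstar_primal h
  rw [hA, cstar_qPoly] at hdual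
  rw [mul_neg, (qPoly_commute f (dual A)).eq, hdual, neg_neg]

lemma IsCore.mul_cstar_self (hS : IsCore N m S) : S * cstar S = dPoly (N ^ m * N ^ m) := by
  refine ext_primal_dual ?_ ?_
  · simp [hS.primal_eq, qPoly_mul]
  · simp [hS.primal_eq, hS.cstar_dual, (qPoly_commute _ (dual S)).eq]

lemma dual_mul_mul_of_primal_eq_cstar {f g : ℝ[X]} (hL₁ : L₁ * cstar L₁ = dPoly g)
    (h : primal L₁ = cstar (primal L₂)) (hS : primal S = qPoly f) :
    dual (L₁ * S * L₂) = primal L₁ *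
      (dual S * cstar (primal L₁) + qPoly f * (dual L₂ - cstar (dual L₁))) := by
  have hL₂ : primal L₂ = cstar (primal L₁) := by rw [h, cstar_cstar]
  have hdual : dual L₁ * qPoly f * cstar (primal L₁) =
      -(primal L₁ * (qPoly f * cstar (dual L₁))) := by
    rw [← (qPoly_commute f _).eq, mul_assoc, dual_mul_cstar_primal hL₁, mul_neg,
      (qPoly_commute f _).left_comm]
  rw [dual_mul, primal_mul, dual_mul, hS, hL₂, add_mul, hdual]
  noncomm_ring

lemma qPoly_dvd_mul_cstar_of_eq_mul_add {f g : ℝ[X]} {b l x : Hq[X]} (hb : qPoly f ∣ b * cstar b)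
    (hl : l * cstar l = qPoly g) :
    qPoly (f * g) ∣ l * (b * cstar l + qPoly f * x) * cstar (l * (b * cstar l + qPoly f * x)) := by
  obtain ⟨y, hy⟩ := qPoly_dvd_add_qPoly_mul_mul_cstar hb (cstar l) x
  exact ⟨y, by rw [mul_mul_cstar_mul, hl, hy, mul_assoc, ← (qPoly_commute g y).eq,
    qPoly_mul, mul_assoc]⟩

lemma IsCore.mul_mul (hN : N ≠ 0) (hS : IsCore N m S) (hL₁ : L₁ * cstar L₁ = dPoly N)
    (hL₂ : L₂ * cstar L₂ = dPoly N) (h : primal L₁ = cstar (primal L₂)) :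
    IsCore N (m + 1) (L₁ * S * L₂) := by
  have hnorm : primal L₁ * cstar (primal L₁) = qPoly N := primal_mul_cstar_primal hL₁
  have hprimal : primal (L₁ * S * L₂) = qPoly (N ^ (m + 1)) := by
    rw [primal_mul, primal_mul, hS.primal_eq, ← (qPoly_commute _ (primal L₁)).eq, mul_assoc,
      ← cstar_cstar (primal L₂), ← h, hnorm, pow_succ, qPoly_mul]
  refine ⟨hprimal, ?_, ?_⟩
  · exact cstar_dual_eq_neg_of_primal_eq_qPoly (pow_ne_zero _ hN) hprimal
      (mul_mul_cstar_mul_eq_dPoly (mul_mul_cstar_mul_eq_dPoly hL₁ hS.mul_cstar_self) hL₂)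
  · rw [dual_mul_mul_of_primal_eq_cstar hL₁ h hS.primal_eq, pow_succ]
    exact qPoly_dvd_mul_cstar_of_eq_mul_add hS.dvd_dual_mul_cstar hnorm

end Core

section Sandwich

/-- `M = M₁ S M₂` with a core `S = N ^ m + ε b` and with `M₁` and `M₂` products of linear motion
polynomials of norm `N` such that `N` does not divide the primal part of `M₁ M₂`. -/
def IsSandwich (N : ℝ[X]) (m : ℕ) (M : DHq[X]) : Prop :=
  ∃ M₁ ∈ linearProducts N, ∃ M₂ ∈ linearProducts N, ∃ S, IsCore N m S ∧
    ¬ qPoly N ∣ primal M₁ * primal M₂ ∧ M = M₁ * S * M₂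

variable {N : ℝ[X]} {m : ℕ} {M M₁ M₂ L S : DHq[X]}

lemma isSandwich_zero_of_not_dvd_primal (hM : M ∈ linearProducts N) (h : ¬ qPoly N ∣ primal M) :
    IsSandwich N 0 M :=
  ⟨M, hM, 1, one_mem _, 1, isCore_one N, by simpa using h, by simp⟩

lemma qPoly_dvd_primal_mul_of_dvd_mul_primal_mul (hN : Irreducible N) {A B : Hq[X]}
    (hL : L ∈ linearFactors N) (hndvd : ¬ qPoly N ∣ A * primal L)
    (hdvd : qPoly N ∣ A * primal L * B) : qPoly N ∣ primal L * B :=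
  (qPoly_dvd_mul_or_dvd_mul_of_dvd_mul_mul hN (primal_mul_cstar_primal hL.2).symm.dvd
    hdvd).resolve_left hndvd

lemma isSandwich_succ_of_dvd_primal_mul (hN : Irreducible N) (hdeg : N.natDegree = 2)
    (hM₁ : M₁ ∈ linearProducts N) (hS : IsCore N m S) (hL : L ∈ linearFactors N)
    (hndvd : ¬ qPoly N ∣ primal M₁) (hdvd : qPoly N ∣ primal M₁ * primal L) :
    IsSandwich N (m + 1) (M₁ * S * L) := by
  obtain rfl | ⟨W, hW, L', hL', rfl⟩ := eq_one_or_exists_mul_of_mem_linearProducts hM₁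
  · rw [primal_one, one_mul] at hdvd
    exact absurd hdvd (not_qPoly_dvd_primal_of_mem_linearFactors hdeg hL)
  rw [primal_mul] at hndvd hdvd
  have hL'L : primal L' = cstar (primal L) := primal_eq_cstar_primal_of_qPoly_dvd_mul hdeg hL' hL
    (qPoly_dvd_primal_mul_of_dvd_mul_primal_mul hN hL' hndvd hdvd)
  refine ⟨W, hW, 1, one_mem _, L' * S * L, hS.mul_mul hN.ne_zero hL'.2 hL.2 hL'L, ?_, ?_⟩
  · rw [primal_one, mul_one]
    exact fun h => hndvd (h.mul_right _)
  · simp only [mul_one, mul_assoc]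

lemma dPoly_dvd_or_isSandwich_mul (hN : Irreducible N) (hdeg : N.natDegree = 2)
    (hM : IsSandwich N (m + 1) M) (hL : L ∈ linearFactors N) :
    dPoly N ∣ M * L ∨ ∃ k, IsSandwich N (k + 1) (M * L) := by
  obtain ⟨M₁, hM₁, M₂, hM₂, S, hS, hndvd, rfl⟩ := hM
  by_cases hdvd : qPoly N ∣ primal M₁ * primal M₂ * primal L
  · obtain rfl | ⟨R, -, L', hL', rfl⟩ := eq_one_or_exists_mul_of_mem_linearProducts hM₂
    · rw [primal_one, mul_one] at hndvd hdvd
      rw [mul_one]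
      exact .inr ⟨m + 1, isSandwich_succ_of_dvd_primal_mul hN hdeg hM₁ hS hL hndvd hdvd⟩
    · rw [primal_mul, ← mul_assoc] at hndvd hdvd
      have hL'L : qPoly N ∣ primal (L' * L) := by
        rw [primal_mul]
        exact qPoly_dvd_primal_mul_of_dvd_mul_primal_mul hN hL' hndvd hdvd
      have hS' : qPoly N ∣ primal (M₁ * S * R) := by
        rw [primal_mul, primal_mul, hS.primal_eq, pow_succ']
        exact (qPoly_dvd_mul_of_dvd_right (qPoly_dvd_qPoly (dvd_mul_right _ _)) _).mul_right _
      left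
      simpa only [mul_assoc] using dPoly_dvd_mul_of_qPoly_dvd_primal hS' hL'L
  · refine .inr ⟨m, M₁, hM₁, M₂ * L, mul_mem_linearProducts hM₂ hL, S, hS, ?_, mul_assoc _ _ _⟩
    rwa [primal_mul, ← mul_assoc]

lemma dPoly_dvd_or_not_dvd_primal_or_isSandwich (hN : Irreducible N) (hdeg : N.natDegree = 2)
    (hM : M ∈ linearProducts N) :
    dPoly N ∣ M ∨ ¬ qPoly N ∣ primal M ∨ ∃ m, IsSandwich N (m + 1) M := by
  induction hM using Submonoid.closure_induction_right with
  | one =>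
    refine .inr (.inl fun h => ?_)
    rw [primal_one, ← qPoly_one] at h
    exact hN.not_dvd_one (dvd_of_qPoly_dvd_qPoly h)
  | mul_right M hM L hL ih =>
    obtain hM' | hM' | ⟨m, hM'⟩ := ih
    · exact .inl (hM'.mul_right L)
    · refine .inr (or_iff_not_imp_left.2 fun h => ?_)
      rw [not_not, primal_mul] at h
      have := isSandwich_succ_of_dvd_primal_mul hN hdeg hM (isCore_one N) hL hM' h
      exact ⟨0, by rwa [mul_one] at this⟩
    · exact (dPoly_dvd_or_isSandwich_mul hN hdeg hM' hL).imp_right .inr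

lemma dPoly_dvd_or_exists_isSandwich (hN : Irreducible N) (hdeg : N.natDegree = 2)
    (hM : M ∈ linearProducts N) : dPoly N ∣ M ∨ ∃ m, IsSandwich N m M := by
  obtain h | h | ⟨m, h⟩ := dPoly_dvd_or_not_dvd_primal_or_isSandwich hN hdeg hM
  · exact .inl h
  · exact .inr ⟨0, isSandwich_zero_of_not_dvd_primal hM h⟩
  · exact .inr ⟨m + 1, h⟩

end Sandwich

section Sides

variable {N f g h₁ h₂ : ℝ[X]} {m : ℕ} {Q₁ Q₂ a b c : Hq[X]}

lemma primal_mul_mul_of_primal_eq {S : DHq[X]} (hS : primal S = qPoly g) (M₁ M₂ : DHq[X]) :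
    primal (M₁ * S * M₂) = qPoly g * (primal M₁ * primal M₂) := by
  rw [primal_mul, primal_mul, hS, ← (qPoly_commute g (primal M₁)).eq, mul_assoc]

lemma dual_mul_mul_of_primal_eq {S : DHq[X]} (hS : primal S = qPoly g) (M₁ M₂ : DHq[X]) :
    dual (M₁ * S * M₂) = primal M₁ * dual S * primal M₂ +
      qPoly g * (primal M₁ * dual M₂ + dual M₁ * primal M₂) := by
  rw [dual_mul, primal_mul, dual_mul, hS, ← (qPoly_commute g (primal M₁)).eq,
    ← (qPoly_commute g (dual M₁)).eq]
  noncomm_ring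

lemma qPoly_dvd_mul_cstar_of_dvd_mul (hb : qPoly g ∣ b * cstar b)
    (hQ₁ : Q₁ * cstar Q₁ = qPoly h₁) (hQ₂ : Q₂ * cstar Q₂ = qPoly h₂)
    (hfg : f ∣ g * g) (hfh₁ : f ∣ g * h₁) (hfh₂ : f ∣ g * h₂) {D : Hq[X]}
    (hD : D = Q₁ * b * Q₂ + qPoly g * (Q₁ * c + a * Q₂)) :
    qPoly f ∣ D * cstar D := by
  have hsplit : D = Q₁ * (b * Q₂ + qPoly g * c) + qPoly g * (a * Q₂) := by
    rw [hD, mul_add, mul_add, (qPoly_commute g Q₁).left_comm, mul_assoc, add_assoc]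
  rw [hsplit]
  refine qPoly_dvd_add_mul_cstar_add ?_ ?_ ?_
  · obtain ⟨y, hy⟩ := qPoly_dvd_add_qPoly_mul_mul_cstar hb Q₂ c
    rw [mul_mul_cstar_mul, hy, hQ₁, mul_assoc, ← (qPoly_commute h₁ y).eq, ← mul_assoc, ← qPoly_mul]
    exact qPoly_dvd_qPoly_mul hfh₁ y
  · have hcross : (b * Q₂ + qPoly g * c) * cstar (qPoly g * (a * Q₂)) =
        qPoly (g * h₂) * (b * cstar a) + qPoly (g * g) * (c * cstar Q₂ * cstar a) := by
      have hnorm : b * Q₂ * (cstar Q₂ * cstar a) = qPoly h₂ * (b * cstar a) := by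
        rw [mul_assoc b, ← mul_assoc Q₂, hQ₂, (qPoly_commute h₂ b).symm.left_comm]
      rw [cstar_qPoly_mul, (qPoly_commute g _).symm.left_comm, cstar_mul, add_mul, mul_add, hnorm,
        qPoly_mul, qPoly_mul]
      simp only [mul_assoc]
    rw [mul_assoc, hcross]
    exact qPoly_dvd_mul_of_dvd_right
      ((qPoly_dvd_qPoly_mul hfh₂ _).add (qPoly_dvd_qPoly_mul hfg _)) _
  · rw [cstar_qPoly_mul, mul_assoc, (qPoly_commute g _).symm.left_comm, ← mul_assoc, ← qPoly_mul]
    exact qPoly_dvd_qPoly_mul hfg _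

lemma cstar_primal_mul_dual_eq (hQ₁ : Q₁ * cstar Q₁ = qPoly h₁) (E : Hq[X]) :
    cstar (qPoly g * (Q₁ * Q₂)) * (Q₁ * b * Q₂ + qPoly g * E) =
      qPoly (g * h₁) * (cstar Q₂ * b * Q₂) + qPoly (g * g) * (cstar (Q₁ * Q₂) * E) := by
  have hnorm : cstar (Q₁ * Q₂) * (Q₁ * b * Q₂) = qPoly h₁ * (cstar Q₂ * b * Q₂) :=
    calc cstar (Q₁ * Q₂) * (Q₁ * b * Q₂) = cstar Q₂ * (cstar Q₁ * Q₁) * (b * Q₂) := by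
          simp only [cstar_mul, mul_assoc]
      _ = qPoly h₁ * (cstar Q₂ * b * Q₂) := by
          rw [cstar_mul_self, hQ₁, ← (qPoly_commute h₁ (cstar Q₂)).eq]
          simp only [mul_assoc]
  rw [cstar_qPoly_mul, mul_add, mul_assoc, hnorm,
    mul_assoc (qPoly g) (cstar _), (qPoly_commute g (cstar _)).symm.left_comm, qPoly_mul, qPoly_mul,
    mul_assoc (qPoly g), mul_assoc (qPoly g)]

lemma le_add_or_qPoly_dvd_of_pow_dvd (hN : Irreducible N) {j s : ℕ} {E : Hq[X]}
    (hQ₁ : Q₁ * cstar Q₁ = qPoly (N ^ j)) (hb : cstar b = -b)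
    (hbb : qPoly (N ^ m) ∣ b * cstar b) (hs : s ≤ 2 * m) {P D : Hq[X]}
    (hP : P = qPoly (N ^ m) * (Q₁ * Q₂))
    (hD : D = Q₁ * b * Q₂ + qPoly (N ^ m) * E)
    (hdvd : qPoly (N ^ s) ∣ cstar P * D) :
    s ≤ m + j ∨ qPoly N ∣ P ∧ qPoly N ∣ D := by
  refine or_iff_not_imp_left.2 fun hlt => ?_
  rw [not_le] at hlt
  have hNm : qPoly N ∣ qPoly (N ^ m) := qPoly_dvd_qPoly (dvd_pow_self N (by lia))
  rw [hP, hD, cstar_primal_mul_dual_eq hQ₁, ← pow_add, ← pow_add, ← two_mul,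
    dvd_add_left (qPoly_dvd_qPoly_mul (pow_dvd_pow N hs) _)] at hdvd
  have hmiddle : qPoly N ∣ cstar Q₂ * b * Q₂ := by
    refine qPoly_dvd_of_mul_dvd_mul (pow_ne_zero (m + j) hN.ne_zero) ?_
    rw [← pow_succ]
    exact (qPoly_dvd_qPoly (pow_dvd_pow N hlt)).trans hdvd
  have hbQ₂ : qPoly N ∣ b * Q₂ := by
    obtain h | h := qPoly_dvd_mul_or_dvd_mul_of_dvd_mul_mul hN (hNm.trans hbb) hmiddle
    · simpa [hb] using qPoly_dvd_cstar h
    · exact h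
  refine ⟨hP ▸ hNm.mul_right _, ?_⟩
  rw [hD, mul_assoc]
  exact (qPoly_dvd_mul_of_dvd_right hbQ₂ Q₁).add (hNm.mul_right E)

lemma le_add_or_qPoly_dvd_of_pow_dvd_mul_cstar (hN : Irreducible N) {k s : ℕ} {E : Hq[X]}
    (hQ₂ : Q₂ * cstar Q₂ = qPoly (N ^ k)) (hb : cstar b = -b)
    (hbb : qPoly (N ^ m) ∣ b * cstar b) (hs : s ≤ 2 * m) {P D : Hq[X]}
    (hP : P = qPoly (N ^ m) * (Q₁ * Q₂))
    (hD : D = Q₁ * b * Q₂ + qPoly (N ^ m) * E)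
    (hdvd : qPoly (N ^ s) ∣ D * cstar P) :
    s ≤ m + k ∨ qPoly N ∣ P ∧ qPoly N ∣ D := by
  have hD' : cstar D = cstar Q₂ * cstar b * cstar Q₁ + qPoly (N ^ m) * cstar E := by
    rw [hD, cstar_add, cstar_mul, cstar_mul, cstar_qPoly_mul, mul_assoc]
  have hP' : cstar P = qPoly (N ^ m) * (cstar Q₂ * cstar Q₁) := by
    rw [hP, cstar_qPoly_mul, cstar_mul]
  refine (le_add_or_qPoly_dvd_of_pow_dvd hN (by rwa [cstar_cstar, cstar_mul_self]) (by simp [hb])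
    (by rwa [cstar_cstar, cstar_mul_self]) hs hP' hD' ?_).imp_right fun h => ?_
  · simpa using qPoly_dvd_cstar hdvd
  · simpa using h.imp qPoly_dvd_cstar qPoly_dvd_cstar

end Sides

section SandwichNorm

variable {N c : ℝ[X]} {m : ℕ} {M : DHq[X]}

lemma IsSandwich.pow_dvd_dual_mul_cstar (hN : Irreducible N) (hM : IsSandwich N m M)
    (hndvd : ¬ dPoly N ∣ M) :
    (∀ s ≤ 2 * m, qPoly (N ^ s) ∣ cstar (primal M) * dual M →
      qPoly (N ^ s) ∣ dual M * cstar (dual M)) ∨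
    (∀ s ≤ 2 * m, qPoly (N ^ s) ∣ dual M * cstar (primal M) →
      qPoly (N ^ s) ∣ dual M * cstar (dual M)) := by
  obtain ⟨M₁, hM₁, M₂, hM₂, S, hS, -, rfl⟩ := hM
  obtain ⟨j, hj⟩ := exists_mul_cstar_eq_of_mem_linearProducts hM₁
  obtain ⟨k, hk⟩ := exists_mul_cstar_eq_of_mem_linearProducts hM₂
  have hQ₁ := primal_mul_cstar_primal hj
  have hQ₂ := primal_mul_cstar_primal hk
  have hP := primal_mul_mul_of_primal_eq hS.primal_eq M₁ M₂
  have hD := dual_mul_mul_of_primal_eq hS.primal_eq M₁ M₂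
  have hnorm {s : ℕ} (hs : s ≤ 2 * m) (hsj : s ≤ m + j) (hsk : s ≤ m + k) :
      qPoly (N ^ s) ∣ dual (M₁ * S * M₂) * cstar (dual (M₁ * S * M₂)) :=
    qPoly_dvd_mul_cstar_of_dvd_mul hS.dvd_dual_mul_cstar hQ₁ hQ₂
      (by rw [← pow_add]; exact pow_dvd_pow N (by lia))
      (by rw [← pow_add]; exact pow_dvd_pow N hsj)
      (by rw [← pow_add]; exact pow_dvd_pow N hsk) hD
  have hcore := hS.dvd_dual_mul_cstar
  rcases le_total j k with hjk | hkj
  · refine .inl fun s hs hdvd => ?_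
    have hsj : s ≤ m + j :=
      (le_add_or_qPoly_dvd_of_pow_dvd hN hQ₁ hS.cstar_dual hcore hs hP hD hdvd).resolve_right
        fun h => hndvd (dPoly_dvd_iff.2 h)
    exact hnorm hs hsj (by lia)
  · refine .inr fun s hs hdvd => ?_
    have hsk : s ≤ m + k :=
      (le_add_or_qPoly_dvd_of_pow_dvd_mul_cstar hN hQ₂ hS.cstar_dual hcore hs hP hD
        hdvd).resolve_right fun h => hndvd (dPoly_dvd_iff.2 h)
    exact hnorm hs (by lia) hsk

lemma IsSandwich.dvd_pow_of_qPoly_dvd_primal (hN : Irreducible N) (hM : IsSandwich N m M)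
    (hc : qPoly c ∣ primal M) : c ∣ N ^ m := by
  obtain ⟨M₁, hM₁, M₂, hM₂, S, hS, hndvd, rfl⟩ := hM
  obtain ⟨j, hj⟩ := exists_mul_cstar_eq_of_mem_linearProducts hM₁
  obtain ⟨k, hk⟩ := exists_mul_cstar_eq_of_mem_linearProducts hM₂
  have hnorm := mul_mul_cstar_mul_eq_dPoly (mul_mul_cstar_mul_eq_dPoly hj hS.mul_cstar_self) hk
  rw [← pow_add, ← pow_add, ← pow_add] at hnorm
  have hcN : c ∣ N ^ (j + (m + m) + k) := by
    refine dvd_of_qPoly_dvd_qPoly ?_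
    rw [← primal_mul_cstar_primal hnorm]
    exact hc.mul_right _
  obtain ⟨r, -, hr⟩ := (dvd_prime_pow hN.prime _).1 hcN
  refine hr.dvd.trans (pow_dvd_pow N (not_lt.1 fun hlt => hndvd ?_))
  refine qPoly_dvd_of_mul_dvd_mul (pow_ne_zero m hN.ne_zero) ?_
  rw [← primal_mul_mul_of_primal_eq hS.primal_eq, ← pow_succ]
  exact (qPoly_dvd_qPoly ((pow_dvd_pow N hlt).trans hr.symm.dvd)).trans hc

end SandwichNorm

section Factorization

variable {N : ℝ[X]} {M : DHq[X]}

lemma dPoly_injective : Function.Injective dPoly := fun f g h =>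
  qPoly_injective (by simpa using congrArg primal h)

lemma exists_norm_list_prod (l : List DHq[X]) (hl : ∀ A ∈ l, IsMotion A) :
    ∃ F, l.prod * cstar l.prod = dPoly F ∧ ∀ A ∈ l, ∃ f, f ∣ F ∧ A * cstar A = dPoly f := by
  induction l with
  | nil => exact ⟨1, by simp [dPoly_one], by simp⟩
  | cons A l ih =>
    obtain ⟨f, -, hf⟩ := hl A List.mem_cons_self
    obtain ⟨F, hF, hFl⟩ := ih fun B hB => hl B (List.mem_cons_of_mem A hB)
    refine ⟨f * F, by rw [List.prod_cons, mul_mul_cstar_mul_eq_dPoly hf hF], fun B hB => ?_⟩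
    obtain rfl | hB := List.mem_cons.1 hB
    · exact ⟨f, dvd_mul_right f F, hf⟩
    · obtain ⟨g, hgF, hg⟩ := hFl B hB
      exact ⟨g, hgF.mul_left f, hg⟩

lemma monic_and_natDegree_of_linear_mul_cstar {h : DHq} {f : ℝ[X]}
    (hf : (X - C h) * cstar (X - C h) = dPoly f) : f.Monic ∧ f.natDegree = 2 := by
  have hp : (X - C h.fst) * (X - C (star h.fst)) = qPoly f := by
    simpa [primal_X_sub_C, cstar_sub] using primal_mul_cstar_primal hf
  constructor
  · refine monic_of_injective (algebraMap ℝ Hq).injective ?_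
    change (qPoly f).Monic
    exact hp ▸ (monic_X_sub_C _).mul (monic_X_sub_C _)
  · rw [← natDegree_qPoly, ← hp, (monic_X_sub_C _).natDegree_mul (monic_X_sub_C _),
      natDegree_X_sub_C, natDegree_X_sub_C]

lemma mem_linearProducts_normalize (hN : Irreducible N) (hdeg : N.natDegree = 2) {n : ℕ}
    (hnorm : M * cstar M = dPoly (N ^ n)) (hM : HasLinFact M) :
    M ∈ linearProducts (normalize N) := by
  obtain ⟨l, hl, rfl⟩ := hM
  obtain ⟨F, hF, hFl⟩ := exists_norm_list_prod (l.map fun h => X - C h) (by simpa using hl)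
  obtain rfl : F = N ^ n := dPoly_injective (hF.symm.trans hnorm)
  refine Submonoid.list_prod_mem _ fun A hA => Submonoid.subset_closure ?_
  obtain ⟨f, hfN, hf⟩ := hFl A hA
  obtain ⟨h, -, rfl⟩ := List.mem_map.1 hA
  obtain ⟨hmonic, hfdeg⟩ := monic_and_natDegree_of_linear_mul_cstar hf
  obtain ⟨i, -, hi⟩ := (dvd_prime_pow hN.prime n).1 hfN
  have hi1 : i = 1 := by
    have := natDegree_eq_of_degree_eq (degree_eq_degree_of_associated hi)
    rw [natDegree_pow] at this
    lia
  rw [hi1, pow_one] at hi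
  refine ⟨⟨h, rfl⟩, ?_⟩
  rw [hf, ← hmonic.normalize_eq_self, normalize_eq_normalize_iff_associated.2 hi]

end Factorization

theorem primary_cg_divides_norm_general (P D : Hq[X]) (c N : ℝ[X]) {n : ℕ}
    (hred : ReducedD (mp P D)) (hNirr : Irreducible N) (hN2 : N.natDegree = 2)
    (hnorm : mp P D * cstar (mp P D) = dPoly (N ^ n)) (hfact : HasLinFact (mp P D))
    (hc : RDvdQ c P) :
    (∀ f, f ∣ c ^ 2 → RDvdQ f (cstar P * D) → RDvdQ f (D * cstar D)) ∨
      (∀ f, f ∣ c ^ 2 → RDvdQ f (D * cstar P) → RDvdQ f (D * cstar D)) := by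
  have hM := mem_linearProducts_normalize hNirr hN2 hnorm hfact
  have hN' : Irreducible (normalize N) := (normalize_associated N).symm.irreducible hNirr
  have hN'2 : (normalize N).natDegree = 2 :=
    (natDegree_eq_of_degree_eq degree_normalize).trans hN2
  have hndvd : ¬ dPoly (normalize N) ∣ mp P D := fun h =>
    hN'.ne_one (hred _ (monic_normalize hNirr.ne_zero) h)
  obtain ⟨m, hm⟩ := (dPoly_dvd_or_exists_isSandwich hN' hN'2 hM).resolve_left hndvd
  have hcm : c ^ 2 ∣ normalize N ^ (2 * m) := by
    rw [mul_comm, pow_mul]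
    exact pow_dvd_pow_of_dvd (hm.dvd_pow_of_qPoly_dvd_primal hN' (by rwa [primal_mp])) 2
  have hpow {A B : Hq[X]}
      (h : ∀ s ≤ 2 * m, qPoly (normalize N ^ s) ∣ A → qPoly (normalize N ^ s) ∣ B) (f : ℝ[X])
      (hf : f ∣ c ^ 2) (hA : RDvdQ f A) : RDvdQ f B := by
    obtain ⟨s, hs, hfs⟩ := (dvd_prime_pow hN'.prime _).1 (hf.trans hcm)
    exact (qPoly_dvd_qPoly hfs.dvd).trans (h s hs ((qPoly_dvd_qPoly hfs.symm.dvd).trans hA))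
  have hside := hm.pow_dvd_dual_mul_cstar hN' hndvd
  rw [primal_mp, dual_mp] at hside
  exact hside.imp hpow hpow

/-- For a primary-norm motion polynomial admitting a linear factorization, `c·g_L` or
`c·g_R` divides `D·D*`. -/
theorem primary_cg_divides_norm
    (n : ℕ) (c : ℝ[X]) (Q D : Hq[X]) (N : ℝ[X]) (M : DHq[X]) (gL gR : ℝ[X])
    (hM : M = mp (qPoly c * Q) D)
    (hc : c.Monic) (hmonic : M.Monic) (hmotion : IsMotion M)
    (hred : ReducedD M) (hbdd : BoundedD M) (hQred : ReducedQ Q)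
    (hdeg : M.natDegree = n)
    (hN2 : N.natDegree = 2) (hNirr : Irreducible N)
    (hQnorm : qPoly (c ^ 2) * (Q * cstar Q) = qPoly (N ^ n))
    (hnorm : M * cstar M = dPoly (N ^ n))
    (hgL : IsMrpf2 gL c (cstar Q * D)) (hgR : IsMrpf2 gR c (D * cstar Q))
    (hfact : HasLinFact M) :
    RDvdQ (c * gL) (D * cstar D) ∨ RDvdQ (c * gR) (D * cstar D) := by
  subst hM
  refine (primary_cg_divides_norm_general (qPoly c * Q) D c N hred hNirr hN2 hnorm hfact
    ⟨Q, rfl⟩).imp (fun h => h _ (sq c ▸ mul_dvd_mul_left c hgL.2.1) ?_)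
    (fun h => h _ (sq c ▸ mul_dvd_mul_left c hgR.2.1) ?_)
  · rw [cstar_qPoly_mul, mul_assoc]
    exact qPoly_mul_dvd_qPoly_mul c hgL.2.2.1
  · rw [cstar_qPoly_mul, (qPoly_commute c D).symm.left_comm]
    exact qPoly_mul_dvd_qPoly_mul c hgR.2.2.1
end
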